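/- arXiv:1309.2065 — 4 statements merged into one kernel-verified Lean document; each statement's English description precedes it below -/
import Mathlib

section
/- Let p be a prime, m ≥ 1, and let A, B ∈ L'_{m,p} be equivalent over ℤ_p (A ∼ B). Let r_A, r_B ∈ ℤ_p^m be any row vectors with A + r_Aᵀr_A ∈ 4L_{m,p} and B + r_Bᵀr_B ∈ 4L_{m,p}. Then the (m+1)×(m+1) half-integral matrices [[1, r_A/2],[r_Aᵀ/2,(A + r_Aᵀr_A)/4]] and [[1, r_B/2],[r_Bᵀ/2,(B + r_Bᵀr_B)/4]] are equivalent over ℤ_p. In particular (taking A = B), the equivalence class of A^{(1)} does not depend on the choice of r. -/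
/-!
With `R` the row matrix of `r`, completing the square gives
`A^{(1)} = Pᵀ · diag(1, A/4) · P`, where `P = [[1, R/2], [0, 1]]`. Hence if `B = Uᵀ A U`, the block
matrix `[[1, c], [0, U]]` carries `A^{(1)}` (built from `r_A`) to `B^{(1)}` (built from `r_B`) as
soon as `2c = r_B - r_A U`. Its determinant is `det U`, so everything comes down to the integrality
of `c = (r_B - r_A U) / 2`.

The half-integral matrices take integral values as quadratic forms (`halfIntegral_quad_mem`), so
with `t = (r_A U)_j` both `B_jj + t²` and `B_jj + (r_B)_j²` lie in `4ℤ_p`. Subtracting,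
`c_j² + t c_j ∈ ℤ_p`, and a number satisfying such a monic equation is itself in `ℤ_p`
(`mem_of_sq_add_mul_mem`). This argument is uniform in `p`.
-/

open Matrix Filter

open scoped Classical

noncomputable section

namespace KM

variable (p : ℕ) [Fact p.Prime]

/-- Entrywise coercion of a `ℤ_[p]`-matrix into `ℚ_[p]`. -/
def q {n m : Type*} (A : Matrix n m ℤ_[p]) : Matrix n m ℚ_[p] :=
  A.map (fun x : ℤ_[p] => (x : ℚ_[p]))

/-- `ℤ_p`-equivalence of symmetric matrices with entries in `ℤ_p`. -/
def IntEquiv {n : Type*} [Fintype n] [DecidableEq n]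
    (A B : Matrix n n ℤ_[p]) : Prop :=
  ∃ U : Matrix n n ℤ_[p], IsUnit U.det ∧ B = Uᵀ * A * U

/-- `ℤ_p`-equivalence of `ℤ_p`-matrices up to reindexing (for index types of
the same cardinality). -/
def IntEquivR {n n' : Type*} [Fintype n] [DecidableEq n] [Fintype n'] [DecidableEq n']
    (A : Matrix n n ℤ_[p]) (B : Matrix n' n' ℤ_[p]) : Prop :=
  ∃ e : n ≃ n', IntEquiv p A (B.submatrix e e)

/-- `ℤ_p`-equivalence of symmetric matrices with entries in `ℚ_p`. -/
def RatEquiv {n : Type*} [Fintype n] [DecidableEq n]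
    (A B : Matrix n n ℚ_[p]) : Prop :=
  ∃ U : Matrix n n ℤ_[p], IsUnit U.det ∧ B = (q p U)ᵀ * A * (q p U)

/-- `ℤ_p`-equivalence of `ℚ_p`-matrices up to reindexing. -/
def RatEquivR {n n' : Type*} [Fintype n] [DecidableEq n] [Fintype n'] [DecidableEq n']
    (A : Matrix n n ℚ_[p]) (B : Matrix n' n' ℚ_[p]) : Prop :=
  ∃ e : n ≃ n', RatEquiv p A (B.submatrix e e)

/-- A matrix over `ℚ_p` is half-integral: symmetric, diagonal entries in `ℤ_p`,
off-diagonal entries in `(1/2)ℤ_p`. -/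
def IsHalfIntegral {n : Type*} [DecidableEq n] (A : Matrix n n ℚ_[p]) : Prop :=
  A.IsSymm ∧ ∀ i j, ∃ x : ℤ_[p], A i j = (if i = j then 1 else 2⁻¹) * (x : ℚ_[p])

/-- `A ∈ 4·L_{m,p}`. -/
def InFourL {n : Type*} [DecidableEq n] (A : Matrix n n ℚ_[p]) : Prop :=
  IsHalfIntegral p ((4 : ℚ_[p])⁻¹ • A)

/-- The rank-one matrix `rᵀ r` viewed over `ℚ_p`. -/
def outer {n : Type*} (r : n → ℤ_[p]) : Matrix n n ℚ_[p] :=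
  Matrix.of fun i j => ((r i : ℚ_[p]) * (r j : ℚ_[p]))

/-- The matrix `A^{(1)} = [[1, r/2], [rᵀ/2, (A + rᵀr)/4]]`. -/
def Aone {n : Type*} [Fintype n] [DecidableEq n]
    (A : Matrix n n ℚ_[p]) (r : n → ℤ_[p]) :
    Matrix (Fin 1 ⊕ n) (Fin 1 ⊕ n) ℚ_[p] :=
  Matrix.fromBlocks 1 (Matrix.of fun _ j => (r j : ℚ_[p]) / 2)
    (Matrix.of fun i _ => (r i : ℚ_[p]) / 2)
    ((4 : ℚ_[p])⁻¹ • (A + outer p r))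

/-- A `ℚ_p`-matrix has all entries in `ℤ_p`. -/
def IsIntegral {n m : Type*} (A : Matrix n m ℚ_[p]) : Prop :=
  ∀ i j, ∃ x : ℤ_[p], A i j = (x : ℚ_[p])

/-- Membership in `L^{(0)}`: nondegenerate, symmetric, integral, even diagonal. -/
def InL0 {n : Type*} [Fintype n] [DecidableEq n] (A : Matrix n n ℚ_[p]) : Prop :=
  A.IsSymm ∧ A.det ≠ 0 ∧ ∀ i j, ∃ x : ℤ_[p], A i j = (if i = j then 2 else 1) * (x : ℚ_[p])

/-- Membership in `L'_{m,p}`. -/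
def InLprime {n : Type*} [Fintype n] [DecidableEq n] (A : Matrix n n ℚ_[p]) : Prop :=
  IsHalfIntegral p A ∧ ∃ r : n → ℤ_[p], InFourL p (A + outer p r)

/-- Membership in `L^{(1)}`: nondegenerate element of `L'`. -/
def InL1 {n : Type*} [Fintype n] [DecidableEq n] (A : Matrix n n ℚ_[p]) : Prop :=
  InLprime p A ∧ A.det ≠ 0

/-- `B[W⁻¹] = (W⁻¹)ᵀ B W⁻¹`. -/
def conjInv {n : Type*} [Fintype n] [DecidableEq n]
    (B : Matrix n n ℚ_[p]) (W : Matrix n n ℤ_[p]) : Matrix n n ℚ_[p] :=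
  ((q p W)⁻¹)ᵀ * B * (q p W)⁻¹

/-- `Ω̃(C)` for `C` an integral symmetric matrix. -/
def OmS {n : Type*} [Fintype n] [DecidableEq n] (C : Matrix n n ℤ_[p]) :
    Set (Matrix n n ℤ_[p]) :=
  {W | W.det ≠ 0 ∧ (conjInv p (q p C) W).IsSymm ∧ IsIntegral p (conjInv p (q p C) W)}

/-- `Ω̃^{(0)}(B)`. -/
def OmT0 {n : Type*} [Fintype n] [DecidableEq n] (B : Matrix n n ℚ_[p]) :
    Set (Matrix n n ℤ_[p]) :=
  {W | W.det ≠ 0 ∧ InL0 p (conjInv p B W)}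

/-- `Ω̃^{(1)}(B)`. -/
def OmT1 {n : Type*} [Fintype n] [DecidableEq n] (B : Matrix n n ℚ_[p]) :
    Set (Matrix n n ℤ_[p]) :=
  {W | W.det ≠ 0 ∧ InL1 p (conjInv p B W)}

/-- `Ω̃^{(j)}(B)` for `j ∈ {0,1}`. -/
def OmTJ {n : Type*} [Fintype n] [DecidableEq n] (j : ℕ) (B : Matrix n n ℚ_[p]) :
    Set (Matrix n n ℤ_[p]) :=
  {W | W.det ≠ 0 ∧ if j = 0 then InL0 p (conjInv p B W) else InL1 p (conjInv p B W)}

/-- The double coset `D_{m,i} = GL·diag(1_{m-i}, p·1_i)·GL`. -/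
def Dset {n : Type*} [Fintype n] [DecidableEq n] (i : ℕ) : Set (Matrix n n ℤ_[p]) :=
  {W | ∃ s : Finset n, s.card = i ∧
    ∃ U V : Matrix n n ℤ_[p], IsUnit U.det ∧ IsUnit V.det ∧
      W = U * Matrix.diagonal (fun j => if j ∈ s then (p : ℤ_[p]) else 1) * V}

/-- `W` and `W'` lie in the same left `GL_m(ℤ_p)`-coset. -/
def SameLeft {n : Type*} [Fintype n] [DecidableEq n] (W W' : Matrix n n ℤ_[p]) : Prop :=
  ∃ U : Matrix n n ℤ_[p], IsUnit U.det ∧ W' = U * W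

/-- `W` and `W'` lie in the same right `GL_m(ℤ_p)`-coset. -/
def SameRight {n : Type*} [Fintype n] [DecidableEq n] (W W' : Matrix n n ℤ_[p]) : Prop :=
  ∃ U : Matrix n n ℤ_[p], IsUnit U.det ∧ W' = W * U

/-- `φ` induces a bijection between the sets of left `GL(ℤ_p)`-cosets of `Ω` and `Ω'`. -/
def InducesLeftBij {n n' : Type*} [Fintype n] [DecidableEq n] [Fintype n'] [DecidableEq n']
    (φ : Matrix n n ℤ_[p] → Matrix n' n' ℤ_[p])
    (Ω : Set (Matrix n n ℤ_[p])) (Ω' : Set (Matrix n' n' ℤ_[p])) : Prop :=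
  (∀ W ∈ Ω, φ W ∈ Ω') ∧
  (∀ W₁ ∈ Ω, ∀ W₂ ∈ Ω, (SameLeft p W₁ W₂ ↔ SameLeft p (φ W₁) (φ W₂))) ∧
  (∀ V ∈ Ω', ∃ W ∈ Ω, SameLeft p (φ W) V)

/-- `A[Y] ≡ B mod p^a S_e`. -/
def densCond {n n' : Type*} [Fintype n] [Fintype n'] [DecidableEq n']
    (A : Matrix n n ℤ_[p]) (B : Matrix n' n' ℤ_[p]) (a : ℕ)
    (Y : Matrix n n' ℤ_[p]) : Prop :=
  ∀ i j, ((p : ℤ_[p]) ^ a * (if i = j then 2 else 1)) ∣ (Yᵀ * A * Y - B) i j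

/-- `#A_a(A,B)`: the number of solutions mod `p^a`. -/
def Acount {n n' : Type*} [Fintype n] [Fintype n'] [DecidableEq n']
    (A : Matrix n n ℤ_[p]) (B : Matrix n' n' ℤ_[p]) (a : ℕ) : ℕ :=
  Nat.card {X : Matrix n n' (ZMod (p ^ a)) //
    ∃ Y : Matrix n n' ℤ_[p], Y.map (PadicInt.toZModPow a) = X ∧ densCond p A B a Y}

/-- The local density `α_p(A,B)`. -/
def locDensPair {n n' : Type*} [Fintype n] [Fintype n'] [DecidableEq n']
    (A : Matrix n n ℤ_[p]) (B : Matrix n' n' ℤ_[p]) : ℝ :=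
  limUnder atTop (fun a : ℕ =>
    (2 : ℝ) ^ (-(if Fintype.card n = Fintype.card n' then (1 : ℤ) else 0)) *
    (p : ℝ) ^ ((a : ℤ) * (-((Fintype.card n : ℤ) * (Fintype.card n' : ℤ)) +
      ((Fintype.card n' : ℤ) * ((Fintype.card n' : ℤ) + 1)) / 2)) *
    (Acount p A B a : ℝ))

/-- The local density `α_p(A) = α_p(A,A)`. -/
def locDens {n : Type*} [Fintype n] [DecidableEq n] (A : Matrix n n ℤ_[p]) : ℝ :=
  locDensPair p A A

/-- `χ_p` on units, for `p` odd. -/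
def chiOdd (u : ℤ_[p]) : ℤ :=
  if IsSquare (u : ℚ_[p]) then 1 else if IsUnit u then -1 else 0

/-- `χ_2` on units. -/
def chi2 (u : ℤ_[2]) : ℤ :=
  if IsSquare (u : ℚ_[2]) then 1
  else if IsSquare (((5 * u : ℤ_[2]) : ℚ_[2])) then -1 else 0

/-- The set of `GL(ℤ_p)`-equivalence classes of elements of `S`. -/
def classesOf {n : Type*} [Fintype n] [DecidableEq n]
    (S : Set (Matrix n n ℤ_[p])) : Set (Set (Matrix n n ℤ_[p])) :=
  (fun A => {A' | IntEquiv p A A'}) '' S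

end KM

namespace KM

variable {p : ℕ} [Fact p.Prime]

/-- The value `uᵀ C u` of a half-integral matrix at an integral vector is integral: replacing `C` by
the upper triangular matrix with entries `C_ii` and `2 C_ij` for `i < j` does not change it. -/
lemma halfIntegral_quad_mem {m : ℕ} {C : Matrix (Fin m) (Fin m) ℚ_[p]} (hC : IsHalfIntegral p C)
    (u : Fin m → ℤ_[p]) :
    ∑ i, ∑ j, (u i : ℚ_[p]) * C i j * (u j : ℚ_[p]) ∈ PadicInt.subring p := by
  obtain ⟨hs, hC⟩ := hC
  let T : Fin m → Fin m → ℚ_[p] := fun i j =>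
    if i < j then 2 * C i j else if i = j then C i j else 0
  have hT : ∀ i j, T i j ∈ PadicInt.subring p := by
    intro i j
    obtain ⟨x, hx⟩ := hC i j
    simp only [T]
    split_ifs with h1 h2
    · rw [hx, if_neg h1.ne, ← mul_assoc, mul_inv_cancel₀ two_ne_zero, one_mul]
      exact x.2
    · rw [hx, if_pos h2, one_mul]
      exact x.2
    · exact zero_mem _
  -- `C - T` is antisymmetric, so its quadratic form vanishes.
  have hanti : ∀ i j, C i j - T i j = -(C j i - T j i) := by
    intro i j
    have hsij : C j i = C i j := hs.apply i j
    simp only [T]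
    rcases lt_trichotomy i j with h | h | h
    · rw [if_pos h, if_neg h.not_gt, if_neg h.ne', hsij]; ring
    · subst h; simp
    · rw [if_pos h, if_neg h.not_gt, if_neg h.ne', hsij]; ring
  have hzero : ∑ i, ∑ j, (u i : ℚ_[p]) * (C i j - T i j) * (u j : ℚ_[p]) = 0 := by
    have h : ∑ i, ∑ j, (u i : ℚ_[p]) * (C i j - T i j) * (u j : ℚ_[p])
        = -∑ i, ∑ j, (u i : ℚ_[p]) * (C i j - T i j) * (u j : ℚ_[p]) := by
      conv_lhs => rw [Finset.sum_comm]
      simp_rw [← Finset.sum_neg_distrib]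
      refine Finset.sum_congr rfl fun i _ => Finset.sum_congr rfl fun j _ => ?_
      rw [hanti j i]; ring
    exact self_eq_neg.mp h
  have heq : ∑ i, ∑ j, (u i : ℚ_[p]) * C i j * (u j : ℚ_[p])
      = ∑ i, ∑ j, (u i : ℚ_[p]) * T i j * (u j : ℚ_[p]) := by
    rw [← sub_eq_zero, ← hzero]
    simp_rw [← Finset.sum_sub_distrib]
    refine Finset.sum_congr rfl fun i _ => Finset.sum_congr rfl fun j _ => ?_
    ring
  rw [heq]
  exact sum_mem fun i _ => sum_mem fun j _ => mul_mem (mul_mem (u i).2 (hT i j)) (u j).2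

/-- `ℤ_p` is integrally closed, for monic quadratics: if `‖y‖ > 1` then `y²` dominates `t y`. -/
lemma mem_of_sq_add_mul_mem {y t : ℚ_[p]} (ht : t ∈ PadicInt.subring p)
    (h : y ^ 2 + t * y ∈ PadicInt.subring p) : y ∈ PadicInt.subring p := by
  change ‖t‖ ≤ 1 at ht
  change ‖y ^ 2 + t * y‖ ≤ 1 at h
  change ‖y‖ ≤ 1
  by_contra! hy
  have hle : ‖y ^ 2‖ ≤ max ‖y ^ 2 + t * y‖ ‖t * y‖ := by
    have h' := Padic.nonarchimedean (y ^ 2 + t * y) (-(t * y))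
    rwa [add_neg_cancel_right, norm_neg] at h'
  rw [norm_pow, norm_mul] at hle
  rcases le_max_iff.mp hle with h1 | h1 <;> nlinarith [norm_nonneg t]

/-- Diagonal entries of a matrix in `4L`, divided by `4`, are integral. -/
lemma InFourL.diag_mem {m : ℕ} {B : Matrix (Fin m) (Fin m) ℚ_[p]} (h : InFourL p B) (j : Fin m) :
    4⁻¹ * B j j ∈ PadicInt.subring p := by
  obtain ⟨x, hx⟩ := h.2 j j
  rw [if_pos rfl, one_mul, Matrix.smul_apply, smul_eq_mul] at hx
  rw [hx]
  exact x.2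

/-- Over `ℤ_p`, `r_B ≡ r_A U` modulo `2` when `B = Uᵀ A U`. -/
lemma exists_half_diff {m : ℕ} {A B : Matrix (Fin m) (Fin m) ℚ_[p]}
    {U : Matrix (Fin m) (Fin m) ℤ_[p]} (hB : B = (q p U)ᵀ * A * q p U) {rA rB : Fin m → ℤ_[p]}
    (hrA : InFourL p (A + outer p rA)) (hrB : InFourL p (B + outer p rB)) (j : Fin m) :
    ∃ c : ℤ_[p], rB j = 2 * c + ∑ k, rA k * U k j := by
  set t : ℤ_[p] := ∑ k, rA k * U k j with ht
  have h1 := halfIntegral_quad_mem hrA (fun i => U i j)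
  have h2 := hrB.diag_mem j
  have hquad : ∑ i, ∑ k, (U i j : ℚ_[p]) * ((4 : ℚ_[p])⁻¹ • (A + outer p rA)) i k * (U k j : ℚ_[p])
      = 4⁻¹ * (B j j + (t : ℚ_[p]) ^ 2) := by
    have hBj : B j j = ∑ i, ∑ k, (U i j : ℚ_[p]) * A i k * (U k j : ℚ_[p]) := by
      rw [hB]
      simp only [Matrix.mul_apply, Finset.sum_mul, q, Matrix.transpose_apply, Matrix.map_apply]
      exact Finset.sum_comm
    have htt : (t : ℚ_[p]) ^ 2
        = ∑ i, ∑ k, (U i j : ℚ_[p]) * (rA i * rA k : ℚ_[p]) * (U k j : ℚ_[p]) := by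
      rw [ht, PadicInt.coe_sum, sq, Finset.sum_mul_sum]
      refine Finset.sum_congr rfl fun i _ => Finset.sum_congr rfl fun k _ => ?_
      push_cast; ring
    rw [hBj, htt, ← Finset.sum_add_distrib, Finset.mul_sum]
    refine Finset.sum_congr rfl fun i _ => ?_
    rw [← Finset.sum_add_distrib, Finset.mul_sum]
    refine Finset.sum_congr rfl fun k _ => ?_
    simp only [Matrix.smul_apply, Matrix.add_apply, outer, Matrix.of_apply, smul_eq_mul]
    ring
  rw [hquad] at h1
  have hy : ((rB j : ℚ_[p]) - t) / 2 ∈ PadicInt.subring p := by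
    refine mem_of_sq_add_mul_mem t.2 ?_
    convert sub_mem h2 h1 using 1
    simp only [Matrix.add_apply, outer, Matrix.of_apply]
    ring
  refine ⟨⟨_, hy⟩, ?_⟩
  apply Subtype.coe_injective
  change (rB j : ℚ_[p]) = 2 * (((rB j : ℚ_[p]) - t) / 2) + t
  ring

end KM

/-- the `GL(ℤ_p)`-equivalence class of `A^{(1)}` depends only on the
`GL(ℤ_p)`-equivalence class of `A ∈ L'_{m,p}` (and not on the choice of `r`). -/
theorem statement0 (p : ℕ) [Fact p.Prime] (m : ℕ) (hm : 1 ≤ m)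
    (A B : Matrix (Fin m) (Fin m) ℚ_[p])
    (hA : KM.IsHalfIntegral p A) (hB : KM.IsHalfIntegral p B)
    (hAB : KM.RatEquiv p A B)
    (rA rB : Fin m → ℤ_[p])
    (hrA : KM.InFourL p (A + KM.outer p rA))
    (hrB : KM.InFourL p (B + KM.outer p rB)) :
    KM.RatEquiv p (KM.Aone p A rA) (KM.Aone p B rB) := by
  obtain ⟨U, hU, hBU⟩ := hAB
  choose c hc using KM.exists_half_diff hBU hrA hrB
  refine ⟨Matrix.fromBlocks 1 (Matrix.of fun _ j => c j) 0 U, ?_, ?_⟩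
  · rw [Matrix.det_fromBlocks_zero₂₁]
    simpa using hU
  let row : (Fin m → ℤ_[p]) → Matrix (Fin 1) (Fin m) ℚ_[p] :=
    fun r => Matrix.of fun _ j => (r j : ℚ_[p])
  have hrow : row rB = (2 : ℚ_[p]) • row c + row rA * KM.q p U := by
    ext i j
    have h2 : ((2 : ℤ_[p]) : ℚ_[p]) = 2 := rfl
    simp [row, hc j, Matrix.mul_apply, KM.q, h2]
  have hone : ∀ (M : Matrix (Fin m) (Fin m) ℚ_[p]) (r : Fin m → ℤ_[p]), KM.Aone p M r =
      Matrix.fromBlocks 1 ((2⁻¹ : ℚ_[p]) • row r) ((2⁻¹ : ℚ_[p]) • (row r)ᵀ)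
        ((4⁻¹ : ℚ_[p]) • (M + (row r)ᵀ * row r)) := by
    intro M r
    unfold KM.Aone
    congr 1
    · ext i j; simp [row]; ring
    · ext i j; simp [row]; ring
    · ext i j; simp [row, KM.outer, Matrix.mul_apply]
  have hq : KM.q p (Matrix.fromBlocks 1 (Matrix.of fun _ j => c j) 0 U) =
      Matrix.fromBlocks (1 : Matrix (Fin 1) (Fin 1) ℚ_[p]) (row c) 0 (KM.q p U) := by
    ext i j
    rcases i with i | i <;> rcases j with j | j <;>
      simp [KM.q, row, Matrix.one_apply, Fin.fin_one_eq_zero]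
  rw [hone, hone, hq, hrow, hBU, Matrix.fromBlocks_transpose, Matrix.fromBlocks_multiply,
    Matrix.fromBlocks_multiply]
  congr 1
  · simp
  · simp [smul_add, smul_smul]
  · simp [smul_add, smul_smul]
  · simp only [Matrix.transpose_add, Matrix.transpose_smul, Matrix.transpose_mul, Matrix.mul_add,
      Matrix.add_mul, Matrix.mul_smul, Matrix.smul_mul, Matrix.mul_one, Matrix.mul_assoc]
    module
end
end

section
/- Let m ≥ 1 and A ∈ L'_{m,2}, and suppose that some row vector r ∈ 2ℤ_2^m satisfies A + rᵀr ∈ 4L_{m,2}. Then A ∈ 4L_{m,2}, so that B := A/4 ∈ L_{m,2}, and A^{(1)} (formed with this r) is equivalent over ℤ_2 to the block diagonal matrix (1) ⊥ B. -/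
/-!
Write `r = 2x` with `x` integral. Then `(A + rᵀr)/4 = A/4 + xᵀx` and `xᵀx` is integral and
symmetric, so `A/4` is half-integral. Moreover `A^{(1)} = [[1, x], [xᵀ, A/4 + xᵀx]]`, and
completing the square, i.e. conjugating by the unipotent integral matrix `[[1, -x], [0, 1]]`,
turns it into `(1) ⊥ A/4`.
-/

open Matrix Filter

open scoped Classical

noncomputable section

/-- for `p = 2` and `r ≡ 0 mod 2`, one has `A ∈ 4L_{m,2}` and
`A^{(1)} ∼ (1) ⊥ (A/4)`. -/
theorem statement2 (m : ℕ) (hm : 1 ≤ m)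
    (A : Matrix (Fin m) (Fin m) ℚ_[2]) (hA : KM.IsHalfIntegral 2 A)
    (r : Fin m → ℤ_[2]) (hr2 : ∀ i, ∃ x : ℤ_[2], r i = 2 * x)
    (hr : KM.InFourL 2 (A + KM.outer 2 r)) :
    KM.InFourL 2 A ∧
    KM.RatEquiv 2 (KM.Aone 2 A r)
      (Matrix.fromBlocks (1 : Matrix (Fin 1) (Fin 1) ℚ_[2]) 0 0 ((4 : ℚ_[2])⁻¹ • A)) := by
  choose x hx using hr2
  have hrx : ∀ i, (r i : ℚ_[2]) = 2 * (x i : ℚ_[2]) := fun i => by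
    rw [hx i]; push_cast; rfl
  have h2 : ((2 : ℤ_[2]) : ℚ_[2]) = 2 := rfl
  constructor
  · refine ⟨hA.1.smul _, fun i j => ?_⟩
    obtain ⟨y, hy⟩ := hr.2 i j
    -- Off the diagonal, `x i * x j` has to be written as `2⁻¹ * (2 * (x i * x j))`.
    refine ⟨y - (if i = j then 1 else 2) * (x i * x j), ?_⟩
    simp only [KM.outer, Matrix.smul_apply, Matrix.add_apply, Matrix.of_apply, smul_eq_mul,
      hrx] at hy ⊢
    split_ifs at hy ⊢ <;> push_cast [h2] <;> linear_combination hy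
  · refine ⟨Matrix.fromBlocks 1 (Matrix.of fun _ j => -x j) 0 1, ?_, ?_⟩
    · simp
    · have hq : KM.q 2 (Matrix.fromBlocks (1 : Matrix (Fin 1) (Fin 1) ℤ_[2])
          (Matrix.of fun _ j => -x j) 0 (1 : Matrix (Fin m) (Fin m) ℤ_[2])) =
          Matrix.fromBlocks 1 (Matrix.of fun _ j => -(x j : ℚ_[2])) 0 1 := by
        ext (i | i) (j | j) <;> simp [KM.q, Matrix.one_apply] <;>
          split_ifs <;> simp
      rw [hq, KM.Aone, Matrix.fromBlocks_transpose, Matrix.fromBlocks_multiply,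
        Matrix.fromBlocks_multiply]
      congr 1
      · simp
      · ext i j
        simp [hrx]
      · ext i j
        simp [hrx]
      · ext i j
        simp [Matrix.mul_apply, Matrix.add_mul, hrx, KM.outer]
        ring
end
end

section
/- Let m ≥ 1 and A ∈ L'_{m,2}, and suppose that some row vector r ∈ ℤ_2^m with r ∉ 2ℤ_2^m satisfies A + rᵀr ∈ 4L_{m,2}. Then there exist a ∈ ℤ_2 with a ≡ -1 mod 4 and B ∈ L_{m-1,2} such that A is equivalent over ℤ_2 to (a) ⊥ 4B, and A^{(1)} is equivalent over ℤ_2 to [[1, 1/2],[1/2, (a+1)/4]] ⊥ B (when m = 1, B is the empty 0×0 matrix). -/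
/-!
Regard `A` as a quadratic form on `ℤ_2^m` and `r` as a linear form. Some coordinate `u` of `r` is
a unit, and after reindexing it is the first one. Since `A + rᵀr ∈ 4L`, the first diagonal entry
of `A` is `4c - u²`, which is a unit, so the first basis vector splits off an orthogonal summand;
rescaling that vector by `u⁻¹` gives `a = 4cu⁻² - 1`. Expanding the orthogonal complement in terms
of the coefficients of `(A + rᵀr)/4` shows that it is `4B` with `B` half-integral, and that `r`
takes even values on it (`KM.decomposition_of_isUnit`).

The form of `A^{(1)}` is `(z + r(x)/2)² + A(x)/4` (`KM.Aone_conj`). Because `r` is even on the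
orthogonal complement, its basis vectors can be shifted by integral multiples of the new basis
vector so that `z + r/2` vanishes on them. They then carry the form `B` and are orthogonal to the
plane spanned by the two remaining vectors, whose Gram matrix is `[[1, 1/2], [1/2, (a+1)/4]]`.
-/

open Matrix Filter

open scoped Classical

noncomputable section

namespace KM

lemma RatEquivR.of_submatrix {n n' l : Type*} [Fintype n] [DecidableEq n] [Fintype n']
    [DecidableEq n'] [Fintype l] [DecidableEq l] (f : n' ≃ n) {A : Matrix n n ℚ_[2]}
    {M : Matrix l l ℚ_[2]} (h : RatEquivR 2 (A.submatrix f f) M) : RatEquivR 2 A M := by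
  obtain ⟨e, U, hU, hM⟩ := h
  refine ⟨f.symm.trans e, U.submatrix f.symm f.symm, ?_, ?_⟩
  · rwa [det_submatrix_equiv_self]
  · have h1 : M.submatrix (f.symm.trans e) (f.symm.trans e)
        = (M.submatrix e e).submatrix f.symm f.symm := rfl
    have h2 : A = (A.submatrix f f).submatrix f.symm f.symm := by ext; simp
    have h3 : q 2 (U.submatrix f.symm f.symm) = (q 2 U).submatrix f.symm f.symm := rfl
    rw [h1, hM, h3, transpose_submatrix]
    conv_rhs => rw [h2]
    rw [submatrix_mul_equiv, submatrix_mul_equiv]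

/-- An element of `ℤ_2` that is not twice another is a unit. -/
lemma isUnit_of_not_even {z : ℤ_[2]} (h : ¬ ∃ x, z = 2 * x) : IsUnit z := by
  by_contra hz
  have h1 : z ∈ IsLocalRing.maximalIdeal ℤ_[2] := (IsLocalRing.mem_maximalIdeal _).2 hz
  rw [PadicInt.maximalIdeal_eq_span_p, Ideal.mem_span_singleton] at h1
  have h2 : (2 : ℤ_[2]) ∣ z := by simpa using h1
  exact h h2

/-- A `2`-adic integer `4c - u²` with `u` a unit is a unit. -/
lemma isUnit_four_mul_sub {c u : ℤ_[2]} (hu : IsUnit u) : IsUnit (4 * c - u * u) := by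
  refine isUnit_of_not_even ?_
  rintro ⟨x, hx⟩
  have h2 : (2 : ℤ_[2]) ∣ u * u := ⟨2 * c - x, by linear_combination -hx⟩
  have h3 : IsUnit (2 : ℤ_[2]) := isUnit_of_dvd_unit h2 (hu.mul hu)
  have h4 : IsUnit ((2 : ℕ) : ℤ_[2]) := by simpa using h3
  exact PadicInt.prime_p.not_isUnit h4

/-- With `ρ = r/2`, the form of `Aone A r` is `(z + ρ(x))² + A(x)/4`; this is its matrix after the
substitution given by `[[1, y], [0, U]]`. -/
lemma Aone_conj {n : Type*} [Fintype n] [DecidableEq n] (A : Matrix n n ℚ_[2]) (r : n → ℤ_[2])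
    (U : Matrix n n ℚ_[2]) (y σ : Matrix (Fin 1) n ℚ_[2])
    (hσ : σ = y + (Matrix.of fun _ j => (r j : ℚ_[2]) / 2) * U) :
    (fromBlocks 1 y 0 U)ᵀ * Aone 2 A r * fromBlocks 1 y 0 U
      = fromBlocks 1 σ σᵀ (σᵀ * σ + (4 : ℚ_[2])⁻¹ • (Uᵀ * A * U)) := by
  set ρ : Matrix (Fin 1) n ℚ_[2] := Matrix.of fun _ j => (r j : ℚ_[2]) / 2 with hρ
  have hA : Aone 2 A r = fromBlocks 1 ρ ρᵀ (ρᵀ * ρ + (4 : ℚ_[2])⁻¹ • A) := by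
    unfold Aone
    congr 1
    ext i j
    simp [hρ, outer, Matrix.mul_apply]
    ring
  rw [hA, hσ, fromBlocks_transpose, fromBlocks_multiply, fromBlocks_multiply]
  congr 1
  · simp
  · simp
  · simp
  · simp only [Matrix.transpose_add, Matrix.transpose_mul, Matrix.mul_add, Matrix.add_mul,
      Matrix.mul_smul, Matrix.smul_mul, Matrix.mul_one, Matrix.mul_assoc]
    abel

/-- The theorem for an index type `Fin 1 ⊕ Fin k` such that the first coordinate of `r` is a
unit. -/
lemma decomposition_of_isUnit (k : ℕ) (A : Matrix (Fin 1 ⊕ Fin k) (Fin 1 ⊕ Fin k) ℚ_[2])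
    (r : Fin 1 ⊕ Fin k → ℤ_[2]) (hu : IsUnit (r (Sum.inl 0)))
    (hr : InFourL 2 (A + outer 2 r)) :
    ∃ (a : ℤ_[2]) (x : ℤ_[2]) (B : Matrix (Fin k) (Fin k) ℚ_[2]),
      a = -1 + 4 * x ∧ IsHalfIntegral 2 B ∧
      RatEquivR 2 A
        (Matrix.fromBlocks (Matrix.of fun (_ : Fin 1) (_ : Fin 1) => (a : ℚ_[2])) 0 0
          ((4 : ℚ_[2]) • B)) ∧
      RatEquivR 2 (Aone 2 A r)
        (Matrix.fromBlocks (!![(1 : ℚ_[2]), 1/2; 1/2, ((a : ℚ_[2]) + 1)/4]) 0 0 B) := by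
  obtain ⟨hsymm, hent⟩ := hr
  choose X hX using hent
  -- `A i j` in terms of the integral coefficients `X i j` of `(A + rᵀr)/4`
  have hAX : ∀ i j, A i j = 4 * ((if i = j then 1 else 2⁻¹) * (X i j : ℚ_[2])) - r i * r j := by
    intro i j
    rw [← hX i j]
    simp [outer]
  have hAs : ∀ i j, A i j = A j i := by
    intro i j
    have := hsymm.apply i j
    simp [outer] at this
    linear_combination -this
  set u := r (Sum.inl 0) with hu_def
  set c := X (Sum.inl 0) (Sum.inl 0) with hc
  obtain ⟨v, huv⟩ := hu.exists_right_inv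
  obtain ⟨d, hd⟩ := (isUnit_four_mul_sub (c := c) hu).exists_right_inv
  set s : Fin k → ℤ_[2] := fun j => r (Sum.inr j) with hs
  set w : Fin k → ℤ_[2] := fun j => X (Sum.inl 0) (Sum.inr j) with hw
  have hc2 : ((2 : ℤ_[2]) : ℚ_[2]) = 2 := rfl
  have hc4 : ((4 : ℤ_[2]) : ℚ_[2]) = 4 := rfl
  have huv' : (u : ℚ_[2]) * v = 1 := by
    rw [← PadicInt.coe_mul, huv, PadicInt.coe_one]
  have hd' : (4 * (c : ℚ_[2]) - u * u) * d = 1 := by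
    rw [← hc4, ← PadicInt.coe_mul, ← PadicInt.coe_mul, ← PadicInt.coe_sub, ← PadicInt.coe_mul,
      hd, PadicInt.coe_one]
  have hA00 : A (Sum.inl 0) (Sum.inl 0) = 4 * c - u * u := by rw [hAX]; simp [hc, hu_def]
  have hA0 : ∀ j, A (Sum.inl 0) (Sum.inr j) = 2 * w j - u * s j := by
    intro j
    rw [hAX]
    simp only [hw, hs, hu_def, reduceCtorEq, if_false]
    ring
  have hA0' : ∀ j, A (Sum.inr j) (Sum.inl 0) = 2 * w j - u * s j := by
    intro j; rw [hAs, hA0]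
  have hAjj : ∀ i j, A (Sum.inr i) (Sum.inr j)
      = 4 * ((if i = j then 1 else 2⁻¹) * (X (Sum.inr i) (Sum.inr j) : ℚ_[2])) - s i * s j := by
    intro i j; rw [hAX]; simp [hs]
  -- orthogonalization coefficients `A₀ⱼ / A₀₀`
  set t : Fin k → ℤ_[2] := fun j => (2 * w j - u * s j) * d with ht
  set B : Matrix (Fin k) (Fin k) ℚ_[2] := Matrix.of fun i j =>
    (4 : ℚ_[2])⁻¹ * (A (Sum.inr i) (Sum.inr j) - (2 * w i - u * s i) * (2 * w j - u * s j) * d)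
    with hB
  set a : ℤ_[2] := -1 + 4 * (c * (v * v)) with ha
  have ha' : (a : ℚ_[2]) = (4 * c - u * u) * (v * v) := by
    rw [ha]; push_cast; rw [hc4]
    linear_combination (u * v + 1 : ℚ_[2]) * huv'
  set U : Matrix (Fin 1 ⊕ Fin k) (Fin 1 ⊕ Fin k) ℤ_[2] :=
    fromBlocks (Matrix.of fun _ _ => v) (Matrix.of fun _ j => - t j) 0 1 with hU
  have hUdet : IsUnit U.det := by
    rw [hU, det_fromBlocks_zero₂₁]
    simpa using IsUnit.of_mul_eq_one u (by rw [mul_comm]; exact huv)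
  have hqU : q 2 U = fromBlocks (Matrix.of fun _ _ => (v : ℚ_[2]))
      (Matrix.of fun _ j => - (t j : ℚ_[2])) 0 1 := by
    ext i j
    rcases i with i | i <;> rcases j with j | j <;> simp [q, hU, Matrix.one_apply]
    split_ifs <;> simp
  have hUAU : (q 2 U)ᵀ * A * q 2 U
      = fromBlocks (Matrix.of fun (_ : Fin 1) (_ : Fin 1) => (a : ℚ_[2])) 0 0
          ((4 : ℚ_[2]) • B) := by
    rw [hqU]
    ext i j
    rcases i with i | i <;> rcases j with j | j <;>
      (try obtain rfl : i = 0 := Subsingleton.elim (α := Fin 1) _ _) <;>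
      (try obtain rfl : j = 0 := Subsingleton.elim (α := Fin 1) _ _) <;>
      simp [Matrix.mul_apply, Matrix.one_apply, hA00, hA0, hA0', ha', hB, ht, hc2,
        -mul_eq_zero]
    · ring
    · linear_combination (-(v * (2 * w j - u * s j)) : ℚ_[2]) * hd'
    · linear_combination (-(v * (2 * w i - u * s i)) : ℚ_[2]) * hd'
    · linear_combination ((2 * w i - u * s i) * (2 * w j - u * s j) * d : ℚ_[2]) * hd'
  refine ⟨a, c * (v * v), B, rfl, ⟨?_, ?_⟩, ⟨Equiv.refl _, U, hUdet, ?_⟩, ?_⟩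
  · ext i j
    simp only [hB, Matrix.transpose_apply, Matrix.of_apply]
    rw [hAs]
    ring
  · intro i j
    by_cases hij : i = j
    · subst hij
      refine ⟨X (Sum.inr i) (Sum.inr i) - (c * s i * s i + w i * w i - u * s i * w i) * d, ?_⟩
      simp only [hB, Matrix.of_apply, hAjj, if_true]
      push_cast [hc2]
      linear_combination (4⁻¹ * s i * s i : ℚ_[2]) * hd'
    · refine ⟨X (Sum.inr i) (Sum.inr j)
        - (2 * (c * s i * s j + w i * w j) - u * (s i * w j + w i * s j)) * d, ?_⟩
      simp only [hB, Matrix.of_apply, hAjj, if_neg hij]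
      push_cast [hc2]
      linear_combination (4⁻¹ * s i * s j : ℚ_[2]) * hd'
  · rw [hUAU]; rfl
  -- `y` cancels the values of `r/2` on the orthogonal complement of the first basis vector
  set y : Matrix (Fin 1) (Fin 1 ⊕ Fin k) ℤ_[2] :=
    Matrix.of fun _ => Sum.elim (fun _ => 0) (fun j => -((2 * c * s j - w j * u) * d)) with hy
  set σ : Matrix (Fin 1) (Fin 1 ⊕ Fin k) ℚ_[2] :=
    Matrix.of fun _ => Sum.elim (fun _ => 2⁻¹) (fun _ => 0) with hσ
  have hq : q 2 (fromBlocks (1 : Matrix (Fin 1) (Fin 1) ℤ_[2]) y 0 U) = fromBlocks 1 (q 2 y) 0 (q 2 U) := by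
    ext i j
    rcases i with i | i <;> rcases j with j | j <;>
      (try obtain rfl : i = 0 := Subsingleton.elim (α := Fin 1) _ _) <;>
      (try obtain rfl : j = 0 := Subsingleton.elim (α := Fin 1) _ _) <;>
      simp [q]
  have hσ' : σ = q 2 y + (Matrix.of fun _ j => (r j : ℚ_[2]) / 2) * q 2 U := by
    rw [hqU]
    ext i j
    rcases j with j | j
    · simp [hσ, q, hy, Matrix.mul_apply, ← hu_def]
      linear_combination (-2⁻¹ : ℚ_[2]) * huv'
    · have hsj : r (Sum.inr j) = s j := rfl
      simp [hσ, q, hy, Matrix.mul_apply, ← hu_def, Matrix.one_apply, hsj, ht, hc2]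
      linear_combination (2⁻¹ * s j : ℚ_[2]) * hd'
  obtain ⟨g, h0, h1⟩ : ∃ g : Fin 1 ⊕ Fin 1 ≃ Fin 2, g (Sum.inl 0) = 0 ∧ g (Sum.inr 0) = 1 :=
    ⟨finSumFinEquiv, rfl, rfl⟩
  refine ⟨(Equiv.sumAssoc _ _ _).symm.trans (Equiv.sumCongr g (Equiv.refl _)),
    fromBlocks 1 y 0 U, ?_, ?_⟩
  · rw [det_fromBlocks_zero₂₁]; simpa using hUdet
  · rw [hq, Aone_conj A r (q 2 U) (q 2 y) σ hσ', hUAU]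
    ext i j
    rcases i with i | i | i <;> rcases j with j | j | j <;>
      (try obtain rfl : i = 0 := Subsingleton.elim (α := Fin 1) _ _) <;>
      (try obtain rfl : j = 0 := Subsingleton.elim (α := Fin 1) _ _) <;>
      simp [hσ, Matrix.mul_apply, h0, h1]
    ring

end KM

/-- for `p = 2` and `r ≢ 0 mod 2`, one has `A ∼ (a) ⊥ 4B` with
`a ≡ -1 mod 4`, and `A^{(1)} ∼ [[1,1/2],[1/2,(a+1)/4]] ⊥ B`. -/
theorem statement3 (m : ℕ) (hm : 1 ≤ m)
    (A : Matrix (Fin m) (Fin m) ℚ_[2]) (hA : KM.IsHalfIntegral 2 A)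
    (r : Fin m → ℤ_[2]) (hr2 : ¬ ∀ i, ∃ x : ℤ_[2], r i = 2 * x)
    (hr : KM.InFourL 2 (A + KM.outer 2 r)) :
    ∃ (a : ℤ_[2]) (x : ℤ_[2]) (B : Matrix (Fin (m - 1)) (Fin (m - 1)) ℚ_[2]),
      a = -1 + 4 * x ∧ KM.IsHalfIntegral 2 B ∧
      KM.RatEquivR 2 A
        (Matrix.fromBlocks (Matrix.of fun (_ : Fin 1) (_ : Fin 1) => (a : ℚ_[2])) 0 0
          ((4 : ℚ_[2]) • B)) ∧
      KM.RatEquivR 2 (KM.Aone 2 A r)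
        (Matrix.fromBlocks (!![(1 : ℚ_[2]), 1/2; 1/2, ((a : ℚ_[2]) + 1)/4]) 0 0 B) := by
  obtain ⟨k, rfl⟩ : ∃ k, m = k + 1 := ⟨m - 1, by omega⟩
  push Not at hr2
  obtain ⟨i₀, hi₀⟩ := hr2
  -- an enumeration of the indices that starts with `i₀`
  obtain ⟨f, hf⟩ : ∃ f : Fin 1 ⊕ Fin k ≃ Fin (k + 1), f (Sum.inl 0) = i₀ := by
    let g : Fin 1 ⊕ Fin k ≃ Fin (k + 1) := Fintype.equivOfCardEq (by simp; omega)
    exact ⟨g.trans (Equiv.swap (g (Sum.inl 0)) i₀), by simp⟩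
  have hu : IsUnit (r (f (Sum.inl 0))) := by
    rw [hf]
    exact KM.isUnit_of_not_even (by push Not; exact hi₀)
  have hr' : KM.InFourL 2 (A.submatrix f f + KM.outer 2 (fun j => r (f j))) := by
    refine ⟨?_, fun i j => ?_⟩
    · ext i j
      exact congrFun (congrFun hr.1 (f i)) (f j)
    · obtain ⟨z, hz⟩ := hr.2 (f i) (f j)
      simp only [f.injective.eq_iff] at hz
      exact ⟨z, hz⟩
  obtain ⟨a, x, B, ha, hB, h1, h2⟩ := KM.decomposition_of_isUnit k (A.submatrix f f)
    (fun j => r (f j)) hu hr'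
  refine ⟨a, x, B, ha, hB, h1.of_submatrix f, ?_⟩
  refine KM.RatEquivR.of_submatrix (Equiv.sumCongr (Equiv.refl (Fin 1)) f) ?_
  have h3 : (KM.Aone 2 A r).submatrix (Equiv.sumCongr (Equiv.refl (Fin 1)) f)
      (Equiv.sumCongr (Equiv.refl (Fin 1)) f)
      = KM.Aone 2 (A.submatrix f f) (fun j => r (f j)) := by
    ext i j
    rcases i with i | i <;> rcases j with j | j <;> simp [KM.Aone, KM.outer]
  rw [h3]
  exact h2
end
end

section
/- Let p be a prime, m ≥ 1, and let S, T ∈ S_m(ℤ_p)^×. Let Ω(S,T) = {W ∈ M_m(ℤ_p) : det W ≠ 0 and S[W] ∼ T}, a set stable under right multiplication by GL_m(ℤ_p). Then the set Ω(S,T)/GL_m(ℤ_p) of right GL_m(ℤ_p)-orbits is finite, and α_p(S,T) = #(Ω(S,T)/GL_m(ℤ_p)) · p^{-m(ν_p(det T) - ν_p(det S))/2} · α_p(T). -/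
/-!
Write `S[Y] = Yᵀ S Y`, and let `Sol S T a` be the set of `Y ∈ M_m(ℤ_p)` with `S[Y] ≡ T` modulo
`p ^ a S_e`. For `a ≥ 1` this set is a union of residue classes modulo `p ^ a`, so its volume for
the Haar probability measure on `M_m(ℤ_p)` is `#A_a(S, T) / p ^ (a m ^ 2)` (`KM.vol_Sol`); the
local density is therefore half the limit of `p ^ (a m (m + 1) / 2) vol (Sol S T a)`.

The key input is a form of Hensel's lemma (`KM.hensel`): for `a ≥ ν(det T) + 2`, every symmetric
`T'` congruent to `T` modulo `p ^ a S_e` equals `T[U]` for some `U ∈ GL_m(ℤ_p)`. One step of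
Newton's method uses `1 + p ^ a T⁻¹ C` where `T' - T = p ^ a (C + Cᵀ)`, and compactness of
`GL_m(ℤ_p)` gives an exact solution. It has two consequences for such `a`.

* `Sol S T a` is the disjoint union of the sets `V · Sol T T a`, where `V` runs over
  representatives, normalized by `S[V] = T`, of the orbits in `Ω(S, T) / GL_m(ℤ_p)`. Left
  multiplication by `V` scales volumes by the inverse of the index `p ^ (m ν(det V))` of
  `V M_m(ℤ_p)`, computed by the Smith normal form, and `2 ν(det V) = ν(det T) - ν(det S)`. Hence
  `vol (Sol S T a)` is the number of orbits times `p ^ (-m (ν(det T) - ν(det S)) / 2)` times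
  `vol (Sol T T a)` (`KM.vol_Sol_eq`).
* `vol (Sol T T a) = p ^ (m (m + 1) / 2) vol (Sol T T (a + 1))` (`KM.vol_Sol_succ`), so the
  sequences defining `α_p(T)` and `α_p(S, T)` are eventually constant.

The number of orbits is finite because the orbit of a normalized `V` is determined by `V` modulo
`p ^ (ν(det T) + 1)` (`KM.finite_cosets`).
-/

open Matrix Filter

open scoped Classical

noncomputable section

namespace KM

variable {p : ℕ} [Fact p.Prime] {m : ℕ}

/-! ### Even symmetric matrices modulo `p ^ a` -/

/-- `X ∈ p ^ a S_e`, for a matrix `X` already known to be symmetric: all entries are divisible by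
`p ^ a`, and the diagonal ones by `2 p ^ a`. -/
def SE (a : ℕ) (X : Matrix (Fin m) (Fin m) ℤ_[p]) : Prop :=
  ∀ i j, ((p : ℤ_[p]) ^ a * (if i = j then 2 else 1)) ∣ X i j

lemma two_dvd_p : (2 : ℤ_[p]) ∣ (p : ℤ_[p]) := by
  rcases (Fact.out : p.Prime).eq_two_or_odd' with h | h
  · simp [h]
  · refine IsUnit.dvd ?_
    have := (PadicInt.norm_natCast_eq_one_iff (p := p) (n := 2)).2
      ((Nat.coprime_primes Fact.out Nat.prime_two).2 (by rintro rfl; exact absurd h (by decide)))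
    exact PadicInt.isUnit_iff.2 (by simpa using this)

lemma p_ne_zero : (p : ℤ_[p]) ≠ 0 := by
  exact_mod_cast (Fact.out : p.Prime).ne_zero

lemma SE.add {a : ℕ} {X Y : Matrix (Fin m) (Fin m) ℤ_[p]} (hX : SE a X) (hY : SE a Y) :
    SE a (X + Y) := fun i j => dvd_add (hX i j) (hY i j)

lemma SE.neg {a : ℕ} {X : Matrix (Fin m) (Fin m) ℤ_[p]} (hX : SE a X) :
    SE a (-X) := fun i j => by simpa using (hX i j)

lemma SE.sub {a : ℕ} {X Y : Matrix (Fin m) (Fin m) ℤ_[p]} (hX : SE a X) (hY : SE a Y) :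
    SE a (X - Y) := by rw [sub_eq_add_neg]; exact hX.add hY.neg

lemma SE.mono {a b : ℕ} (h : a ≤ b) {X : Matrix (Fin m) (Fin m) ℤ_[p]} (hX : SE b X) :
    SE a X := fun i j => (mul_dvd_mul_right (pow_dvd_pow _ h) _).trans (hX i j)

/-- Since `2 ∣ p` in `ℤ_p`, divisibility by `p ^ (a + 1)` implies the evenness condition modulo
`p ^ a`. -/
lemma SE_smul_pow {a b : ℕ} (h : a + 1 ≤ b) (X : Matrix (Fin m) (Fin m) ℤ_[p]) :
    SE a ((p : ℤ_[p]) ^ b • X) := by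
  intro i j
  rw [Matrix.smul_apply, smul_eq_mul]
  refine Dvd.dvd.mul_right ?_ _
  refine Dvd.dvd.trans ?_ (pow_dvd_pow _ h)
  rw [pow_succ]
  refine mul_dvd_mul_left _ ?_
  split_ifs
  · exact two_dvd_p
  · exact one_dvd _

lemma SE_of_add_transpose (a : ℕ) (C : Matrix (Fin m) (Fin m) ℤ_[p]) :
    SE a ((p : ℤ_[p]) ^ a • (C + Cᵀ)) := by
  intro i j
  rw [Matrix.smul_apply, smul_eq_mul]
  refine mul_dvd_mul_left _ ?_
  split_ifs with h
  · subst h; simp [← two_mul]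
  · exact one_dvd _

/-- A symmetric matrix in `p ^ a S_e` is `p ^ a (C + Cᵀ)` for an integral `C`. -/
lemma SE.exists_eq {a : ℕ} {X : Matrix (Fin m) (Fin m) ℤ_[p]} (hs : X.IsSymm) (hX : SE a X) :
    ∃ C : Matrix (Fin m) (Fin m) ℤ_[p], X = (p : ℤ_[p]) ^ a • (C + Cᵀ) := by
  choose c hc using hX
  refine ⟨Matrix.of fun i j => if i ≤ j then c i j else 0, ?_⟩
  ext i j
  simp only [Matrix.smul_apply, Matrix.add_apply, Matrix.transpose_apply, Matrix.of_apply,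
    smul_eq_mul]
  rcases lt_trichotomy i j with h | h | h
  · rw [if_pos h.le, if_neg h.not_ge, hc, if_neg h.ne]; ring
  · subst h; rw [if_pos le_rfl, hc, if_pos rfl]; ring
  · rw [if_pos h.le, if_neg h.not_ge, ← hs.apply, hc, if_neg h.ne]; ring

lemma SE.conj {a : ℕ} {X : Matrix (Fin m) (Fin m) ℤ_[p]} (hs : X.IsSymm) (hX : SE a X)
    (V : Matrix (Fin m) (Fin m) ℤ_[p]) : SE a (Vᵀ * X * V) := by
  obtain ⟨C, rfl⟩ := hX.exists_eq hs
  have : Vᵀ * ((p : ℤ_[p]) ^ a • (C + Cᵀ)) * V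
      = (p : ℤ_[p]) ^ a • ((Vᵀ * C * V) + (Vᵀ * C * V)ᵀ) := by
    simp only [Matrix.mul_smul, Matrix.smul_mul, Matrix.mul_add, Matrix.add_mul,
      Matrix.transpose_mul, Matrix.transpose_transpose, Matrix.mul_assoc]
  rw [this]
  exact SE_of_add_transpose _ _

lemma isSymm_conj {S : Matrix (Fin m) (Fin m) ℤ_[p]} (hs : S.IsSymm)
    (V : Matrix (Fin m) (Fin m) ℤ_[p]) : (Vᵀ * S * V).IsSymm := by
  simp [Matrix.IsSymm, Matrix.transpose_mul, hs.eq, Matrix.mul_assoc]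

lemma det_conj (S V : Matrix (Fin m) (Fin m) ℤ_[p]) :
    (Vᵀ * S * V).det = V.det ^ 2 * S.det := by
  rw [Matrix.det_mul, Matrix.det_mul, Matrix.det_transpose]; ring

/-- For `a ≥ 1` the congruence `S[Y] ≡ T` modulo `p ^ a S_e` depends only on `Y` modulo `p ^ a`. -/
lemma densCond_congr {S T Y Z : Matrix (Fin m) (Fin m) ℤ_[p]} (hS : S.IsSymm) {a : ℕ}
    (ha : 1 ≤ a) (h : densCond p S T a Y) : densCond p S T a (Y + (p : ℤ_[p]) ^ a • Z) := by
  have key : (Y + (p : ℤ_[p]) ^ a • Z)ᵀ * S * (Y + (p : ℤ_[p]) ^ a • Z) - T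
      = (Yᵀ * S * Y - T) + (p : ℤ_[p]) ^ a • ((Zᵀ * S * Y) + (Zᵀ * S * Y)ᵀ)
        + (p : ℤ_[p]) ^ (a + a) • (Zᵀ * S * Z) := by
    simp only [Matrix.transpose_add, Matrix.transpose_smul, Matrix.mul_add, Matrix.add_mul,
      Matrix.mul_smul, Matrix.smul_mul, Matrix.transpose_mul, Matrix.transpose_transpose, hS.eq,
      smul_add, Matrix.mul_assoc, pow_add, mul_smul]
    abel
  have h1 : SE a (Yᵀ * S * Y - T) := h
  have : SE a ((Y + (p : ℤ_[p]) ^ a • Z)ᵀ * S * (Y + (p : ℤ_[p]) ^ a • Z) - T) := by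
    rw [key]
    exact (h1.add (SE_of_add_transpose _ _)).add (SE_smul_pow (by omega) _)
  exact this

/-! ### Hensel's lemma for symmetric matrices -/

lemma isUnit_det_one_add (Z : Matrix (Fin m) (Fin m) ℤ_[p]) :
    IsUnit (1 + (p : ℤ_[p]) • Z).det := by
  by_contra h
  have h1 : (1 + (p : ℤ_[p]) • Z).det ∈ IsLocalRing.maximalIdeal ℤ_[p] := h
  rw [← PadicInt.ker_toZMod, RingHom.mem_ker, RingHom.map_det] at h1
  have h2 : (PadicInt.toZMod (p := p)).mapMatrix (1 + (p : ℤ_[p]) • Z) = 1 := by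
    ext i j
    simp [Matrix.one_apply, apply_ite]
  rw [h2, Matrix.det_one] at h1
  exact one_ne_zero h1

/-- If `T' - T ∈ p ^ a S_e` is written `p ^ a (C + Cᵀ)`, then `1 + p ^ a T⁻¹ C` solves
`T[U] = T'` up to the quadratic error `p ^ (2 a) Cᵀ T⁻¹ C`. -/
lemma hensel_step {T T' : Matrix (Fin m) (Fin m) ℤ_[p]} (hT : T.IsSymm) (hd : T.det ≠ 0)
    (hT' : T'.IsSymm) {a : ℕ} (ha : T.det.valuation + 2 ≤ a) (h : SE a (T' - T)) :
    ∃ U : Matrix (Fin m) (Fin m) ℤ_[p], IsUnit U.det ∧ SE (a + 1) (T' - Uᵀ * T * U) := by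
  obtain ⟨C, hC⟩ := h.exists_eq (hT'.sub hT)
  set k := T.det.valuation with hk
  have hu := PadicInt.unitCoeff_spec hd
  set u := PadicInt.unitCoeff hd
  obtain ⟨b, hb⟩ : ∃ b, a = k + (b + 1) := ⟨a - k - 1, by omega⟩
  let D : Matrix (Fin m) (Fin m) ℤ_[p] := ((u⁻¹ : ℤ_[p]ˣ) : ℤ_[p]) • (T.adjugate * C)
  have hTD : T * D = (p : ℤ_[p]) ^ k • C := by
    simp only [D]
    rw [Matrix.mul_smul, ← Matrix.mul_assoc, Matrix.mul_adjugate, Matrix.smul_mul, Matrix.one_mul,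
      smul_smul, hu, ← mul_assoc, Units.inv_mul, one_mul]
  let X : Matrix (Fin m) (Fin m) ℤ_[p] := (p : ℤ_[p]) ^ (b + 1) • D
  have hTX : T * X = (p : ℤ_[p]) ^ a • C := by
    simp only [X]
    rw [Matrix.mul_smul, hTD, smul_smul, ← pow_add, hb]; congr 2; omega
  have hXT : Xᵀ * T = (p : ℤ_[p]) ^ a • Cᵀ := by
    have := congrArg Matrix.transpose hTX
    rwa [Matrix.transpose_mul, hT.eq, Matrix.transpose_smul] at this
  refine ⟨1 + X, ?_, ?_⟩
  · have : X = (p : ℤ_[p]) • ((p : ℤ_[p]) ^ b • D) := by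
      rw [smul_smul, ← pow_succ']
    rw [this]; exact isUnit_det_one_add _
  · have : T' - (1 + X)ᵀ * T * (1 + X) = - ((p : ℤ_[p]) ^ (b + 1 + a) • (Dᵀ * C)) := by
      have e1 : (1 + X)ᵀ * T * (1 + X) = T + T * X + Xᵀ * T + Xᵀ * (T * X) := by
        simp only [Matrix.transpose_add, Matrix.transpose_one, Matrix.add_mul, Matrix.mul_add,
          Matrix.one_mul, Matrix.mul_one, Matrix.mul_assoc]; abel
      have e2 : Xᵀ * (T * X) = (p : ℤ_[p]) ^ (b + 1 + a) • (Dᵀ * C) := by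
        rw [hTX]; simp only [X]
        rw [Matrix.transpose_smul, Matrix.mul_smul, Matrix.smul_mul, smul_smul, pow_add _ _ a,
          mul_comm]
      rw [e1, e2, hTX, hXT, ← sub_sub, ← sub_sub, ← sub_sub, hC, smul_add]
      abel
    rw [this]
    exact (SE_smul_pow (by omega) _).neg

lemma hensel_iter {T T' : Matrix (Fin m) (Fin m) ℤ_[p]} (hT : T.IsSymm) (hd : T.det ≠ 0)
    (hT' : T'.IsSymm) {a : ℕ} (ha : T.det.valuation + 2 ≤ a) (h : SE a (T' - T)) (n : ℕ) :
    ∃ U : Matrix (Fin m) (Fin m) ℤ_[p], IsUnit U.det ∧ SE (a + n) (T' - Uᵀ * T * U) := by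
  induction n with
  | zero => exact ⟨1, by simp, by simpa using h⟩
  | succ n ih =>
    obtain ⟨U, hU, hUT⟩ := ih
    have hd1 : (Uᵀ * T * U).det ≠ 0 := by
      rw [det_conj]; exact mul_ne_zero (pow_ne_zero _ hU.ne_zero) hd
    have hv : (Uᵀ * T * U).det.valuation = T.det.valuation := by
      rw [det_conj, PadicInt.valuation_mul (pow_ne_zero _ hU.ne_zero) hd, PadicInt.valuation_pow]
      have h0 : U.det.valuation = 0 := by
        have h1 := PadicInt.isUnit_iff.1 hU
        have h2 := (PadicInt.norm_le_pow_iff_le_valuation U.det hU.ne_zero 1).not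
        have h3 : ¬ 1 ≤ U.det.valuation := by
          rw [← h2, h1, not_le]
          simpa using inv_lt_one_of_one_lt₀
            (by exact_mod_cast (Fact.out : p.Prime).one_lt : (1 : ℝ) < p)
        omega
      rw [h0]; simp
    obtain ⟨V, hV, hVT⟩ := hensel_step (isSymm_conj hT U) hd1 hT' (a := a + n)
      (by rw [hv]; omega) hUT
    refine ⟨U * V, by rw [Matrix.det_mul]; exact hU.mul hV, ?_⟩
    rw [Matrix.transpose_mul]
    have e : Vᵀ * Uᵀ * T * (U * V) = Vᵀ * (Uᵀ * T * U) * V := by simp only [Matrix.mul_assoc]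
    rw [e]; exact hVT

instance instCompactMat : CompactSpace (Matrix (Fin m) (Fin m) ℤ_[p]) :=
  inferInstanceAs (CompactSpace (Fin m → Fin m → ℤ_[p]))

instance instSecondCountableMat : SecondCountableTopology (Matrix (Fin m) (Fin m) ℤ_[p]) :=
  inferInstanceAs (SecondCountableTopology (Fin m → Fin m → ℤ_[p]))

lemma isClosed_dvd (d : ℤ_[p]) : IsClosed {x : ℤ_[p] | d ∣ x} := by
  have : {x : ℤ_[p] | d ∣ x} = Set.range (fun y => d * y) := by
    ext x; simp [dvd_def, eq_comm]
  rw [this]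
  exact (isCompact_range (by fun_prop)).isClosed

lemma isClosed_SE (a : ℕ) : IsClosed {X : Matrix (Fin m) (Fin m) ℤ_[p] | SE a X} := by
  simp only [SE, Set.ofPred_forall]
  refine isClosed_iInter fun i => isClosed_iInter fun j => ?_
  exact (isClosed_dvd _).preimage (continuous_id.matrix_elem i j)

lemma isClosed_isUnit_det : IsClosed {U : Matrix (Fin m) (Fin m) ℤ_[p] | IsUnit U.det} := by
  simp only [PadicInt.isUnit_iff]
  exact isClosed_eq (by fun_prop) continuous_const

/-- A symmetric matrix close enough to a nondegenerate `T` is equivalent to `T`. -/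
lemma hensel {T T' : Matrix (Fin m) (Fin m) ℤ_[p]} (hT : T.IsSymm) (hd : T.det ≠ 0)
    (hT' : T'.IsSymm) {a : ℕ} (ha : T.det.valuation + 2 ≤ a) (h : SE a (T' - T)) :
    ∃ U : Matrix (Fin m) (Fin m) ℤ_[p], IsUnit U.det ∧ T' = Uᵀ * T * U := by
  let K : ℕ → Set (Matrix (Fin m) (Fin m) ℤ_[p]) := fun n =>
    {U | IsUnit U.det} ∩ {U | SE (a + n) (T' - Uᵀ * T * U)}
  have hcl : ∀ n, IsClosed (K n) := fun n =>
    isClosed_isUnit_det.inter ((isClosed_SE (a + n)).preimage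
      (by fun_prop : Continuous fun U : Matrix (Fin m) (Fin m) ℤ_[p] => T' - Uᵀ * T * U))
  obtain ⟨U, hU⟩ := IsCompact.nonempty_iInter_of_sequence_nonempty_isCompact_isClosed K
    (fun n U hU => ⟨hU.1, SE.mono (by omega) hU.2⟩)
    (fun n => hensel_iter hT hd hT' ha h n) (hcl 0).isCompact hcl
  rw [Set.mem_iInter] at hU
  refine ⟨U, (hU 0).1, ?_⟩
  rw [← sub_eq_zero]
  ext i j
  rw [Matrix.zero_apply]
  by_contra hne
  set x := (T' - Uᵀ * T * U) i j
  have h1 : (p : ℤ_[p]) ^ (a + (x.valuation + 1)) ∣ x :=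
    (Dvd.intro _ rfl).trans ((hU (x.valuation + 1)).2 i j)
  have h2 := (PadicInt.mem_span_pow_iff_le_valuation x hne _).1 (Ideal.mem_span_singleton.2 h1)
  omega

end KM

namespace KM

variable {p : ℕ} [Fact p.Prime] {m : ℕ}

/-! ### The index of `W M_m(ℤ_p)` in `M_m(ℤ_p)` -/

lemma toZModPow_surjective (n : ℕ) :
    Function.Surjective (PadicInt.toZModPow n : ℤ_[p] →+* ZMod (p ^ n)) := by
  have : NeZero (p ^ n) := ⟨pow_ne_zero _ (Fact.out : p.Prime).ne_zero⟩
  exact ZMod.ringHom_surjective _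

lemma toZModPow_eq_zero_iff (n : ℕ) (x : ℤ_[p]) :
    PadicInt.toZModPow n x = 0 ↔ (p : ℤ_[p]) ^ n ∣ x := by
  rw [← RingHom.mem_ker, PadicInt.ker_toZModPow, Ideal.mem_span_singleton]

lemma card_quot_span {x : ℤ_[p]} (hx : x ≠ 0) :
    Nat.card (ℤ_[p] ⧸ Ideal.span {x}) = p ^ x.valuation := by
  have h1 : Ideal.span {x} = RingHom.ker (PadicInt.toZModPow (p := p) x.valuation) := by
    rw [PadicInt.ker_toZModPow, Ideal.span_singleton_eq_span_singleton]
    refine ⟨(PadicInt.unitCoeff hx)⁻¹, ?_⟩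
    have := PadicInt.unitCoeff_spec hx
    nth_rewrite 1 [this]
    rw [mul_comm, ← mul_assoc, Units.inv_mul, one_mul]
  rw [h1, Nat.card_congr
    (RingHom.quotientKerEquivOfSurjective (toZModPow_surjective (p := p) x.valuation)).toEquiv,
    Nat.card_zmod]

lemma valuation_prod {ι : Type*} (s : Finset ι) (f : ι → ℤ_[p]) (hf : ∀ i ∈ s, f i ≠ 0) :
    (∏ i ∈ s, f i).valuation = ∑ i ∈ s, (f i).valuation := by
  classical
  induction s using Finset.induction_on with
  | empty => simp
  | insert i s hi ih =>
    rw [Finset.prod_insert hi, Finset.sum_insert hi, PadicInt.valuation_mul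
      (hf i (by simp)) (Finset.prod_ne_zero_iff.2 fun j hj => hf j (by simp [hj])),
      ih fun j hj => hf j (by simp [hj])]

lemma valuation_eq_zero_of_isUnit {x : ℤ_[p]} (hx : IsUnit x) : x.valuation = 0 := by
  obtain ⟨y, hy⟩ := hx.exists_right_inv
  have hy0 : y ≠ 0 := by rintro rfl; simp at hy
  have := congrArg PadicInt.valuation hy
  rw [PadicInt.valuation_mul hx.ne_zero hy0, PadicInt.valuation_one] at this
  omega

lemma valuation_eq_of_associated {x y : ℤ_[p]} (h : Associated x y) (hx : x ≠ 0) :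
    x.valuation = y.valuation := by
  obtain ⟨u, rfl⟩ := h
  rw [PadicInt.valuation_mul hx u.isUnit.ne_zero, valuation_eq_zero_of_isUnit u.isUnit, add_zero]

/-- The cokernel of an injective endomorphism `L` of a finite free `ℤ_p`-module has
`p ^ ν(det L)` elements, by the Smith normal form. -/
lemma card_quot_range {ι N : Type*} [Fintype ι] [DecidableEq ι] [AddCommGroup N]
    [Module ℤ_[p] N] (b : Module.Basis ι ℤ_[p] N) (L : N →ₗ[ℤ_[p]] N)
    (hL : Function.Injective L) (hdet : LinearMap.det L ≠ 0) :
    Nat.card (N ⧸ LinearMap.range L) = p ^ (LinearMap.det L).valuation := by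
  let e : N ≃ₗ[ℤ_[p]] LinearMap.range L := LinearEquiv.ofInjective L hL
  have h : Module.finrank ℤ_[p] (LinearMap.range L) = Module.finrank ℤ_[p] N :=
    e.symm.finrank_eq
  let c := Submodule.smithNormalFormCoeffs b h
  let b' := Submodule.smithNormalFormTopBasis b h
  let ab := Submodule.smithNormalFormBotBasis b h
  have ab_eq := Submodule.smithNormalFormBotBasis_def b h
  let e' : N ≃ₗ[ℤ_[p]] LinearMap.range L := b'.equiv ab (Equiv.refl _)
  let f : N →ₗ[ℤ_[p]] N := (LinearMap.range L).subtype.comp (e' : N →ₗ[ℤ_[p]] LinearMap.range L)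
  have ha : ∀ i, f (b' i) = c i • b' i := by
    intro i
    change ((b'.equiv ab (Equiv.refl _) (b' i) : LinearMap.range L) : N) = _
    rw [b'.equiv_apply, Equiv.refl_apply]
    exact ab_eq i
  have hf : LinearMap.det f = ∏ i, c i := by
    rw [← LinearMap.det_toMatrix b', ← Matrix.det_diagonal]
    congr 1
    ext i j
    rw [LinearMap.toMatrix_apply, ha, map_smul, Module.Basis.repr_self, Finsupp.smul_single,
      smul_eq_mul, mul_one]
    by_cases h : i = j
    · rw [h, Matrix.diagonal_apply_eq, Finsupp.single_eq_same]
    · rw [Matrix.diagonal_apply_ne _ h, Finsupp.single_eq_of_ne h]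
  have hLe : L = (LinearMap.range L).subtype ∘ₗ (e : N →ₗ[ℤ_[p]] LinearMap.range L) := by
    ext x; rfl
  have hassoc : Associated (LinearMap.det L) (∏ i, c i) := by
    rw [← hf]
    conv_lhs => rw [hLe]
    exact LinearMap.associated_det_comp_equiv _ _ _
  have hprod : ∏ i, c i ≠ 0 := hassoc.ne_zero_iff.1 hdet
  rw [valuation_eq_of_associated hassoc hdet, valuation_prod _ _
    (fun i _ => Finset.prod_ne_zero_iff.1 hprod i (Finset.mem_univ _)),
    Nat.card_congr (Submodule.quotientEquivPiSpan (LinearMap.range L) b h).toEquiv, Nat.card_pi,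
    ← Finset.prod_pow_eq_pow_sum]
  refine Finset.prod_congr rfl fun i _ => card_quot_span ?_
  exact Finset.prod_ne_zero_iff.1 hprod i (Finset.mem_univ _)

lemma det_mulLeft (W : Matrix (Fin m) (Fin m) ℤ_[p]) :
    LinearMap.det (LinearMap.mulLeft ℤ_[p] W) = W.det ^ m := by
  let t : Matrix (Fin m) (Fin m) ℤ_[p] ≃ₗ[ℤ_[p]] (Fin m → Fin m → ℤ_[p]) :=
    Matrix.transposeLinearEquiv (Fin m) (Fin m) ℤ_[p] ℤ_[p]
  have h : (LinearMap.pi fun i => (Matrix.toLin' W).comp (LinearMap.proj i) :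
        (Fin m → Fin m → ℤ_[p]) →ₗ[ℤ_[p]] _)
      = t ∘ₗ (LinearMap.mulLeft ℤ_[p] W) ∘ₗ t.symm := by
    ext x i j
    rfl
  rw [← LinearMap.det_conj _ t, ← h, LinearMap.det_pi]
  simp

lemma mul_left_injective' {W : Matrix (Fin m) (Fin m) ℤ_[p]} (hW : W.det ≠ 0) :
    Function.Injective (fun X : Matrix (Fin m) (Fin m) ℤ_[p] => W * X) := by
  intro X Y h
  have h1 := congrArg (fun Z => W.adjugate * Z) h
  simp only [← Matrix.mul_assoc, Matrix.adjugate_mul, Matrix.smul_mul, Matrix.one_mul] at h1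
  exact smul_right_injective _ hW h1

lemma index_mulLeft {W : Matrix (Fin m) (Fin m) ℤ_[p]} (hW : W.det ≠ 0) :
    (AddMonoidHom.mulLeft W).range.index = p ^ (m * W.det.valuation) := by
  have := card_quot_range (Matrix.stdBasis ℤ_[p] (Fin m) (Fin m)) (LinearMap.mulLeft ℤ_[p] W)
    (mul_left_injective' hW) (by rw [det_mulLeft]; exact pow_ne_zero _ hW)
  rw [det_mulLeft, PadicInt.valuation_pow] at this
  rw [← this]
  rfl

/-! ### Haar measure on `M_m(ℤ_p)` -/

open MeasureTheory

instance instMeasurableSpaceMat : MeasurableSpace (Matrix (Fin m) (Fin m) ℤ_[p]) := borel _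

instance instBorelSpaceMat : BorelSpace (Matrix (Fin m) (Fin m) ℤ_[p]) := ⟨rfl⟩

variable (p m) in
/-- The Haar probability measure on the additive group `M_m(ℤ_p)`. -/
def vol : Measure (Matrix (Fin m) (Fin m) ℤ_[p]) := Measure.addHaarMeasure ⊤

instance instHaarVol : (vol p m).IsAddHaarMeasure := by unfold vol; infer_instance

lemma vol_univ : vol p m Set.univ = 1 := by
  have := Measure.addHaarMeasure_self
    (K₀ := (⊤ : TopologicalSpace.PositiveCompacts (Matrix (Fin m) (Fin m) ℤ_[p])))
  simpa [vol] using this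

instance instProbVol : IsProbabilityMeasure (vol p m) := ⟨vol_univ⟩

/-- An injective continuous additive endomorphism scales the Haar measure by the volume of its
range, by uniqueness of Haar measure. -/
lemma vol_image (f : Matrix (Fin m) (Fin m) ℤ_[p] →+ Matrix (Fin m) (Fin m) ℤ_[p])
    (hc : Continuous f) (hi : Function.Injective f) (E : Set (Matrix (Fin m) (Fin m) ℤ_[p])) :
    vol p m (f '' E) = vol p m (Set.range f) * vol p m E := by
  have hemb : MeasurableEmbedding f := (hc.isClosedEmbedding hi).measurableEmbedding
  have : (Measure.comap f (vol p m)).IsAddLeftInvariant :=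
    Measure.IsAddLeftInvariant.comap (vol p m) hemb
  have hfin : IsFiniteMeasure (Measure.comap f (vol p m)) :=
    ⟨by rw [hemb.comap_apply]; exact measure_lt_top _ _⟩
  have h := Measure.isAddLeftInvariant_eq_smul (Measure.comap f (vol p m)) (vol p m)
  have h1 := congrArg (fun ν => ν Set.univ) h
  have h2 := congrArg (fun ν => ν E) h
  simp only [hemb.comap_apply, Measure.smul_apply, vol_univ, Set.image_univ] at h1 h2
  rw [h1, h2, ENNReal.smul_def, ENNReal.smul_def, smul_eq_mul, smul_eq_mul, mul_one]

lemma vol_mul_left {W : Matrix (Fin m) (Fin m) ℤ_[p]} (hW : W.det ≠ 0)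
    (E : Set (Matrix (Fin m) (Fin m) ℤ_[p])) :
    vol p m ((fun X => W * X) '' E) = ((p : ENNReal) ^ (m * W.det.valuation))⁻¹ * vol p m E := by
  have hc : Continuous (AddMonoidHom.mulLeft W) :=
    (by fun_prop : Continuous fun X : Matrix (Fin m) (Fin m) ℤ_[p] => W * X)
  have h := vol_image (AddMonoidHom.mulLeft W) hc (mul_left_injective' hW) E
  have hp0 : p ^ (m * W.det.valuation) ≠ 0 := pow_ne_zero _ (Fact.out : p.Prime).ne_zero
  have hidx := index_mulLeft hW
  have : (AddMonoidHom.mulLeft W).range.FiniteIndex := ⟨by rw [hidx]; exact hp0⟩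
  have hm : MeasurableSet 
      ((AddMonoidHom.mulLeft W).range : Set (Matrix (Fin m) (Fin m) ℤ_[p])) := by
    rw [AddMonoidHom.coe_range]
    exact (isCompact_range hc).isClosed.measurableSet
  have h2 := AddSubgroup.index_mul_measure _ hm (vol p m)
  rw [hidx, vol_univ, AddMonoidHom.coe_range, mul_comm, Nat.cast_pow] at h2
  rw [ENNReal.eq_inv_of_mul_eq_one_left h2] at h
  exact h

lemma vol_mul_right {U : Matrix (Fin m) (Fin m) ℤ_[p]} (hU : IsUnit U.det)
    (E : Set (Matrix (Fin m) (Fin m) ℤ_[p])) :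
    vol p m ((fun X => X * U) '' E) = vol p m E := by
  have hU' : IsUnit U := (Matrix.isUnit_iff_isUnit_det _).2 hU
  have hc : Continuous (AddMonoidHom.mulRight U) :=
    (by fun_prop : Continuous fun X : Matrix (Fin m) (Fin m) ℤ_[p] => X * U)
  have h := vol_image (AddMonoidHom.mulRight U) hc hU'.mul_left_injective E
  have h1 : Set.range (AddMonoidHom.mulRight U) = Set.univ :=
    Set.range_eq_univ.2 (IsUnit.isUnit_iff_mulRight_bijective.1 hU').surjective
  rw [h1, vol_univ, one_mul] at h
  exact h

/-- Volume of a set that is a union of residue classes modulo `p ^ a`. -/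
lemma vol_preimage (a : ℕ) (s : Set (Matrix (Fin m) (Fin m) (ZMod (p ^ a)))) :
    vol p m {Y | Y.map (PadicInt.toZModPow a) ∈ s}
      = (Nat.card s : ENNReal) * ((p : ENNReal) ^ (a * m ^ 2))⁻¹ := by
  have : NeZero (p ^ a) := ⟨pow_ne_zero _ (Fact.out : p.Prime).ne_zero⟩
  set r : Matrix (Fin m) (Fin m) ℤ_[p] → Matrix (Fin m) (Fin m) (ZMod (p ^ a)) :=
    fun Y => Y.map (PadicInt.toZModPow a) with hr
  have hsurj : Function.Surjective r := by
    intro X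
    choose g hg using toZModPow_surjective (p := p) a
    exact ⟨X.map g, by ext i j; simp [hr, hg]⟩
  have hker : IsClosed (r ⁻¹' {0}) := by
    have : r ⁻¹' {0} = ⋂ i, ⋂ j, {Y | (p : ℤ_[p]) ^ a ∣ Y i j} := by
      ext Y
      simp [hr, ← Matrix.ext_iff, toZModPow_eq_zero_iff]
    rw [this]
    refine isClosed_iInter fun i => isClosed_iInter fun j => ?_
    exact (isClosed_dvd _).preimage (continuous_id.matrix_elem i j)
  have hfib : ∀ X, ∃ Y, r ⁻¹' {X} = (fun Z => Y + Z) ⁻¹' (r ⁻¹' {0}) := by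
    intro X
    obtain ⟨Y, rfl⟩ := hsurj X
    refine ⟨-Y, ?_⟩
    ext Z
    simp only [Set.mem_preimage, Set.mem_singleton_iff, hr]
    rw [← Matrix.ext_iff, ← Matrix.ext_iff]
    simp only [Matrix.map_apply, Matrix.add_apply, Matrix.neg_apply, map_add, map_neg,
      Matrix.zero_apply, neg_add_eq_zero]
    exact forall₂_congr fun _ _ => eq_comm
  have hvolfib : ∀ X, vol p m (r ⁻¹' {X}) = vol p m (r ⁻¹' {0}) := by
    intro X
    obtain ⟨Y, hY⟩ := hfib X
    rw [hY, measure_preimage_add]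
  have hmeas : ∀ X, MeasurableSet (r ⁻¹' {X}) := by
    intro X
    obtain ⟨Y, hY⟩ := hfib X
    rw [hY]
    exact (hker.preimage (by fun_prop)).measurableSet
  have hsum : ∀ s : Set (Matrix (Fin m) (Fin m) (ZMod (p ^ a))),
      vol p m (r ⁻¹' s) = (Nat.card s : ENNReal) * vol p m (r ⁻¹' {0}) := by
    intro s
    have h1 : r ⁻¹' s = ⋃ X ∈ s.toFinset, r ⁻¹' {X} := by
      ext Y; simp
    rw [h1, measure_biUnion_finset]
    · simp_rw [hvolfib]
      rw [Finset.sum_const, nsmul_eq_mul, Set.toFinset_card, Nat.card_eq_fintype_card]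
    · intro X _ X' _ hne
      exact Disjoint.preimage _ (by simpa using hne)
    · exact fun X _ => hmeas X
  have htot := hsum Set.univ
  rw [Set.preimage_univ, vol_univ] at htot
  have hcard : Nat.card (Set.univ : Set (Matrix (Fin m) (Fin m) (ZMod (p ^ a))))
      = p ^ (a * m ^ 2) := by
    rw [Nat.card_univ]
    have : Nat.card (Fin m → Fin m → ZMod (p ^ a)) = p ^ (a * m ^ 2) := by
      rw [Nat.card_fun, Nat.card_fun, Nat.card_zmod, Nat.card_fin, ← pow_mul, ← pow_mul]
      ring_nf
    exact this
  rw [hcard, mul_comm] at htot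
  push_cast at htot
  rw [← ENNReal.eq_inv_of_mul_eq_one_left htot.symm]
  exact hsum s

end KM

namespace KM

variable {p : ℕ} [Fact p.Prime] {m : ℕ}

/-! ### Solution sets and their volumes -/

open MeasureTheory

/-- The `p`-adic solutions `Y` of the congruence `S[Y] ≡ T` modulo `p ^ a S_e`. -/
def Sol (S T : Matrix (Fin m) (Fin m) ℤ_[p]) (a : ℕ) : Set (Matrix (Fin m) (Fin m) ℤ_[p]) :=
  {Y | densCond p S T a Y}

lemma mem_Sol {S T Y : Matrix (Fin m) (Fin m) ℤ_[p]} {a : ℕ} :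
    Y ∈ Sol S T a ↔ SE a (Yᵀ * S * Y - T) := Iff.rfl

lemma measurableSet_Sol (S T : Matrix (Fin m) (Fin m) ℤ_[p]) (a : ℕ) :
    MeasurableSet (Sol S T a) := by
  have : IsClosed (Sol S T a) := (isClosed_SE a).preimage
    (by fun_prop : Continuous fun Y : Matrix (Fin m) (Fin m) ℤ_[p] => Yᵀ * S * Y - T)
  exact this.measurableSet

lemma vol_Sol {S : Matrix (Fin m) (Fin m) ℤ_[p]} (hS : S.IsSymm)
    (T : Matrix (Fin m) (Fin m) ℤ_[p]) {a : ℕ} (ha : 1 ≤ a) :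
    vol p m (Sol S T a) = (Acount p S T a : ENNReal) * ((p : ENNReal) ^ (a * m ^ 2))⁻¹ := by
  have h := vol_preimage (p := p) (m := m) a {X | ∃ Y : Matrix (Fin m) (Fin m) ℤ_[p],
    Y.map (PadicInt.toZModPow a) = X ∧ densCond p S T a Y}
  have h2 : Sol S T a = {Y | Y.map (PadicInt.toZModPow a) ∈ {X | ∃ Y : Matrix (Fin m) (Fin m) ℤ_[p],
      Y.map (PadicInt.toZModPow a) = X ∧ densCond p S T a Y}} := by
    ext Y
    constructor
    · exact fun hY => ⟨Y, rfl, hY⟩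
    · rintro ⟨Y', hYY, hY'⟩
      have hd : ∀ i j, (p : ℤ_[p]) ^ a ∣ Y i j - Y' i j := by
        intro i j
        have := congrFun (congrFun hYY i) j
        rw [← toZModPow_eq_zero_iff, map_sub, sub_eq_zero]
        exact this.symm
      choose Z hZ using hd
      have : Y = Y' + (p : ℤ_[p]) ^ a • (Matrix.of Z) := by
        ext i j
        simp [← hZ]
      rw [this]
      exact densCond_congr hS ha hY'
  rw [h2, h]
  rfl

/-- Close to `T`, Hensel's lemma produces an exact equivalence. -/
lemma exists_of_mem_Sol {S T Y : Matrix (Fin m) (Fin m) ℤ_[p]} (hS : S.IsSymm) (hT : T.IsSymm)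
    (hd : T.det ≠ 0) {a : ℕ} (ha : T.det.valuation + 2 ≤ a) (hY : Y ∈ Sol S T a) :
    ∃ U : Matrix (Fin m) (Fin m) ℤ_[p], IsUnit U.det ∧ Yᵀ * S * Y = Uᵀ * T * U :=
  hensel hT hd (isSymm_conj hS Y) ha hY

lemma isUnit_det_of_mem_Sol {T Y : Matrix (Fin m) (Fin m) ℤ_[p]} (hT : T.IsSymm)
    (hd : T.det ≠ 0) {a : ℕ} (ha : T.det.valuation + 2 ≤ a) (hY : Y ∈ Sol T T a) :
    IsUnit Y.det := by
  obtain ⟨U, hU, hUT⟩ := exists_of_mem_Sol hT hT hd ha hY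
  have h := congrArg Matrix.det hUT
  rw [det_conj, det_conj] at h
  have h2 := mul_right_cancel₀ hd h
  exact (isUnit_pow_iff two_ne_zero).1 (h2 ▸ hU.pow 2)

/-- Passing from `p ^ a` to `p ^ (a + 1)` cuts the volume of the solutions of `T[U] ≡ T` by the
factor `#(S_e / p S_e) = p ^ (m (m + 1) / 2)`: the classes of `(T[U] - T) / p ^ a` in `S_e / p S_e`
partition the solutions modulo `p ^ a` into right translates of the solutions modulo
`p ^ (a + 1)`, and every class occurs by Hensel's lemma. -/
lemma vol_Sol_succ {T : Matrix (Fin m) (Fin m) ℤ_[p]} (hT : T.IsSymm)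
    (hd : T.det ≠ 0) {a : ℕ} (ha : T.det.valuation + 2 ≤ a) :
    vol p m (Sol T T a) = (p : ENNReal) ^ ((m + 1).choose 2) * vol p m (Sol T T (a + 1)) := by
  have : NeZero p := ⟨(Fact.out : p.Prime).ne_zero⟩
  choose g hg using ZMod.ringHom_surjective (PadicInt.toZMod (p := p))
  have hz : ∀ x : ℤ_[p], PadicInt.toZMod x = 0 ↔ (p : ℤ_[p]) ∣ x := by
    intro x
    rw [← RingHom.mem_ker, PadicInt.ker_toZMod, PadicInt.maximalIdeal_eq_span_p,
      Ideal.mem_span_singleton]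
  -- the even symmetric matrix attached to a choice of residues
  let B : (Sym2 (Fin m) → ZMod p) → Matrix (Fin m) (Fin m) ℤ_[p] := fun c =>
    Matrix.of fun i j => (p : ℤ_[p]) ^ a * (if i = j then 2 else 1) * g (c s(i, j))
  have hBs : ∀ c, (B c).IsSymm := by
    intro c
    ext i j
    simp only [B, Matrix.transpose_apply, Matrix.of_apply, Sym2.eq_swap (a := j), eq_comm (a := j)]
  have hBe : ∀ c, SE a (B c) := fun c i j => Dvd.intro _ rfl
  have hexU : ∀ c, ∃ U : Matrix (Fin m) (Fin m) ℤ_[p], IsUnit U.det ∧ T + B c = Uᵀ * T * U :=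
    fun c => hensel hT hd (hT.add (hBs c)) ha (by simpa using hBe c)
  choose U hU hUT using hexU
  -- membership in the translate by `U c` is a congruence for `T[Y]`
  have hmem : ∀ c Y, Y ∈ (fun X => X * U c) '' Sol T T (a + 1) ↔
      SE (a + 1) (Yᵀ * T * Y - (T + B c)) := by
    intro c Y
    have hconj : ∀ X V : Matrix (Fin m) (Fin m) ℤ_[p],
        (X * V)ᵀ * T * (X * V) - Vᵀ * T * V = Vᵀ * (Xᵀ * T * X - T) * V := by
      intro X V
      simp only [Matrix.transpose_mul, Matrix.mul_sub, Matrix.sub_mul, Matrix.mul_assoc]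
    constructor
    · rintro ⟨X, hX, rfl⟩
      rw [hUT, hconj]
      exact SE.conj ((isSymm_conj hT X).sub hT) hX _
    · intro h
      refine ⟨Y * (U c)⁻¹, ?_, Matrix.nonsing_inv_mul_cancel_right _ _ (hU c)⟩
      rw [mem_Sol]
      have hV : ((U c)⁻¹)ᵀ * ((U c)ᵀ * T * U c) * (U c)⁻¹ = T := by
        have e : ((U c)⁻¹)ᵀ * ((U c)ᵀ * T * U c) * (U c)⁻¹
            = (U c * (U c)⁻¹)ᵀ * T * (U c * (U c)⁻¹) := by
          simp only [Matrix.transpose_mul, Matrix.mul_assoc]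
        rw [e, Matrix.mul_nonsing_inv _ (hU c)]
        simp
      have e : (Y * (U c)⁻¹)ᵀ * T * (Y * (U c)⁻¹) - T
          = ((U c)⁻¹)ᵀ * (Yᵀ * T * Y - (T + B c)) * (U c)⁻¹ := by
        rw [hUT, Matrix.mul_sub, Matrix.sub_mul, hV]
        simp only [Matrix.transpose_mul, Matrix.mul_assoc]
      rw [e]
      exact SE.conj ((isSymm_conj hT Y).sub (hT.add (hBs c))) h _
  have hε : ∀ i j : Fin m, (p : ℤ_[p]) ^ a * (if i = j then 2 else 1) ≠ 0 := by
    intro i j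
    refine mul_ne_zero (pow_ne_zero _ p_ne_zero) ?_
    split_ifs <;> norm_num
  have hunion : Sol T T a = ⋃ c ∈ (Finset.univ : Finset (Sym2 (Fin m) → ZMod p)),
      (fun X => X * U c) '' Sol T T (a + 1) := by
    ext Y
    simp only [Finset.mem_univ, Set.iUnion_true, Set.mem_iUnion, hmem]
    constructor
    · intro hY
      have hYs : (Yᵀ * T * Y - T).IsSymm := (isSymm_conj hT Y).sub hT
      have hY' : SE a (Yᵀ * T * Y - T) := hY
      choose b hb using hY'
      have hbs : ∀ i j, b i j = b j i := by
        intro i j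
        have h1 := hYs.apply i j
        rw [hb, hb] at h1
        simp only [eq_comm (a := j)] at h1
        exact (mul_left_cancel₀ (hε i j) h1).symm
      refine ⟨Sym2.lift ⟨fun i j => PadicInt.toZMod (b i j), fun i j => congrArg _ (hbs i j)⟩, ?_⟩
      intro i j
      rw [← sub_sub, Matrix.sub_apply, hb]
      simp only [B, Matrix.of_apply, Sym2.lift_mk]
      rw [← mul_sub, pow_succ, mul_right_comm]
      refine mul_dvd_mul_left _ ?_
      rw [← hz, map_sub, hg, sub_self]
    · rintro ⟨c, hc⟩
      have := (hc.mono (Nat.le_succ a)).add (hBe c)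
      rw [mem_Sol]
      convert this using 1
      abel
  rw [hunion, measure_biUnion_finset]
  · simp_rw [fun c => vol_mul_right (hU c) (Sol T T (a + 1))]
    rw [Finset.sum_const, nsmul_eq_mul, Finset.card_univ, Fintype.card_fun, ZMod.card, Sym2.card,
      Fintype.card_fin]
    push_cast
    rfl
  · intro c _ c' _ hne
    rw [Function.onFun, Set.disjoint_left]
    intro Y h1 h2
    rw [hmem] at h1 h2
    apply hne
    have h3 := h2.sub h1
    funext z
    induction z using Sym2.ind with
    | _ i j =>
      have h4 := h3 i j
      rw [sub_sub_sub_cancel_left, add_sub_add_left_eq_sub, Matrix.sub_apply] at h4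
      simp only [B, Matrix.of_apply] at h4
      rw [← mul_sub, pow_succ, mul_right_comm] at h4
      have h5 := (mul_dvd_mul_iff_left (hε i j)).1 h4
      rw [← hz, map_sub, hg, hg, sub_eq_zero] at h5
      exact h5
  · intro c _
    have hU' : IsUnit (U c) := (Matrix.isUnit_iff_isUnit_det _).2 (hU c)
    have hemb := (by fun_prop : Continuous fun X : Matrix (Fin m) (Fin m) ℤ_[p] => X * U c)
      |>.isClosedEmbedding hU'.mul_left_injective |>.measurableEmbedding
    exact hemb.measurableSet_image.2 (measurableSet_Sol _ _ _)

end KM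

namespace KM

variable {p : ℕ} [Fact p.Prime] {m : ℕ}

/-! ### Right cosets in `Ω(S, T)` -/

open MeasureTheory

/-- The set `Ω(S, T)` of nondegenerate `W` with `S[W] ∼ T`. -/
def Om (S T : Matrix (Fin m) (Fin m) ℤ_[p]) : Set (Matrix (Fin m) (Fin m) ℤ_[p]) :=
  {W | W.det ≠ 0 ∧ IntEquiv p (Wᵀ * S * W) T}

/-- The right coset `W GL_m(ℤ_p)`. -/
def coset (W : Matrix (Fin m) (Fin m) ℤ_[p]) : Set (Matrix (Fin m) (Fin m) ℤ_[p]) :=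
  {W' | SameRight p W W'}

lemma mem_coset_self (W : Matrix (Fin m) (Fin m) ℤ_[p]) : W ∈ coset W :=
  ⟨1, by simp, by simp⟩

lemma coset_eq {W W' : Matrix (Fin m) (Fin m) ℤ_[p]} (h : SameRight p W W') :
    coset W = coset W' := by
  obtain ⟨U, hU, rfl⟩ := h
  ext V
  constructor
  · rintro ⟨A, hA, rfl⟩
    refine ⟨U⁻¹ * A, ?_, ?_⟩
    · rw [Matrix.det_mul]; exact (Matrix.isUnit_nonsing_inv_det _ hU).mul hA
    · rw [← Matrix.mul_assoc, Matrix.mul_nonsing_inv_cancel_right _ _ hU]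
  · rintro ⟨A, hA, rfl⟩
    exact ⟨U * A, by rw [Matrix.det_mul]; exact hU.mul hA, by rw [Matrix.mul_assoc]⟩

/-- Inside its coset, an element of `Ω(S, T)` may be replaced by some `W` with `S[W] = T`. -/
lemma exists_rep {S T W : Matrix (Fin m) (Fin m) ℤ_[p]} (hW : W ∈ Om S T) :
    ∃ V, SameRight p W V ∧ V.det ≠ 0 ∧ Vᵀ * S * V = T := by
  obtain ⟨hd, U, hU, hT⟩ := hW
  refine ⟨W * U, ⟨U, hU, rfl⟩, ?_, ?_⟩
  · rw [Matrix.det_mul]; exact mul_ne_zero hd hU.ne_zero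
  · rw [hT]; simp only [Matrix.transpose_mul, Matrix.mul_assoc]

lemma valuation_of_rep {S T V : Matrix (Fin m) (Fin m) ℤ_[p]} (hS : S.det ≠ 0)
    (hV : V.det ≠ 0) (h : Vᵀ * S * V = T) :
    T.det.valuation = 2 * V.det.valuation + S.det.valuation := by
  rw [← h, det_conj, PadicInt.valuation_mul (pow_ne_zero _ hV) hS, PadicInt.valuation_pow]

/-- The coset of `V` is determined by `V` modulo `p ^ (ν(det V) + 1)`: a perturbation by
`p ^ (ν(det V) + 1) Z` is `V (1 + p D)` with `D` integral, by Cramer's rule. -/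
lemma sameRight_of_congr {V V' : Matrix (Fin m) (Fin m) ℤ_[p]} (hV : V.det ≠ 0) {k : ℕ}
    (hk : V.det.valuation ≤ k) (h : ∀ i j, (p : ℤ_[p]) ^ (k + 1) ∣ V' i j - V i j) :
    SameRight p V V' := by
  choose Z hZ using h
  have hu := PadicInt.unitCoeff_spec hV
  set u := PadicInt.unitCoeff hV
  obtain ⟨b, rfl⟩ := Nat.exists_eq_add_of_le hk
  let D : Matrix (Fin m) (Fin m) ℤ_[p] :=
    (((u⁻¹ : ℤ_[p]ˣ) : ℤ_[p]) * (p : ℤ_[p]) ^ b) • (V.adjugate * Matrix.of Z)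
  refine ⟨1 + (p : ℤ_[p]) • D, isUnit_det_one_add D, ?_⟩
  have h1 : V * ((p : ℤ_[p]) • D) = (p : ℤ_[p]) ^ (V.det.valuation + b + 1) • Matrix.of Z := by
    simp only [D]
    rw [Matrix.mul_smul, Matrix.mul_smul, ← Matrix.mul_assoc, Matrix.mul_adjugate, Matrix.smul_mul,
      Matrix.one_mul, smul_smul, smul_smul]
    congr 1
    calc (p : ℤ_[p]) * (((u⁻¹ : ℤ_[p]ˣ) : ℤ_[p]) * (p : ℤ_[p]) ^ b) * V.det
        = (p : ℤ_[p]) * (((u⁻¹ : ℤ_[p]ˣ) : ℤ_[p]) * (p : ℤ_[p]) ^ b) *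
          ((u : ℤ_[p]) * (p : ℤ_[p]) ^ V.det.valuation) := by rw [← hu]
      _ = (((u⁻¹ : ℤ_[p]ˣ) : ℤ_[p]) * (u : ℤ_[p])) *
          (p : ℤ_[p]) ^ (V.det.valuation + b + 1) := by ring
      _ = _ := by rw [Units.inv_mul, one_mul]
  rw [Matrix.mul_add, Matrix.mul_one, h1]
  ext i j
  simp [← hZ]

lemma finite_cosets {S T : Matrix (Fin m) (Fin m) ℤ_[p]} (hS : S.det ≠ 0) :
    (coset '' Om S T).Finite := by
  set k := T.det.valuation
  have : NeZero (p ^ (k + 1)) := ⟨pow_ne_zero _ (Fact.out : p.Prime).ne_zero⟩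
  let r : Matrix (Fin m) (Fin m) ℤ_[p] → Matrix (Fin m) (Fin m) (ZMod (p ^ (k + 1))) :=
    fun Y => Y.map (PadicInt.toZModPow (k + 1))
  let R : Set (Matrix (Fin m) (Fin m) ℤ_[p]) := {V | V.det ≠ 0 ∧ Vᵀ * S * V = T}
  have hsub : coset '' Om S T ⊆ coset '' R := by
    rintro _ ⟨W, hW, rfl⟩
    obtain ⟨V, hWV, hV⟩ := exists_rep hW
    exact ⟨V, hV, (coset_eq hWV).symm⟩
  refine Set.Finite.subset ?_ hsub
  -- the coset of `V ∈ R` depends only on the residue of `V`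
  let Φ : Matrix (Fin m) (Fin m) (ZMod (p ^ (k + 1))) → Set (Matrix (Fin m) (Fin m) ℤ_[p]) :=
    fun X => if h : ∃ V ∈ R, r V = X then coset h.choose else ∅
  refine (Set.finite_range Φ).subset ?_
  rintro _ ⟨V, hV, rfl⟩
  refine ⟨r V, ?_⟩
  have hex : ∃ V' ∈ R, r V' = r V := ⟨V, hV, rfl⟩
  simp only [Φ]
  rw [dif_pos hex]
  obtain ⟨h1, h2⟩ := hex.choose_spec
  refine coset_eq (sameRight_of_congr (k := k) h1.1 ?_ ?_)
  · have := valuation_of_rep hS h1.1 h1.2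
    omega
  · intro i j
    have := congrFun (congrFun h2 i) j
    rw [← toZModPow_eq_zero_iff, map_sub, sub_eq_zero]
    exact this.symm

/-- Up to Hensel's lemma, the solutions of `S[Y] ≡ T` are the disjoint union, over the cosets with
representatives `V` such that `S[V] = T`, of the translates `V · Sol T T a`. -/
lemma vol_Sol_eq {S T : Matrix (Fin m) (Fin m) ℤ_[p]} (hS : S.IsSymm) (hSd : S.det ≠ 0)
    (hT : T.IsSymm) (hTd : T.det ≠ 0) {a : ℕ} (ha : T.det.valuation + 2 ≤ a) :
    vol p m (Sol S T a) = ((coset '' Om S T).ncard : ENNReal) *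
      (((p : ENNReal) ^ (m * ((T.det.valuation - S.det.valuation) / 2)))⁻¹ *
        vol p m (Sol T T a)) := by
  have hfin := finite_cosets (T := T) hSd
  have hrep : ∀ C, ∃ V : Matrix (Fin m) (Fin m) ℤ_[p], C ∈ coset '' Om S T →
      coset V = C ∧ V.det ≠ 0 ∧ Vᵀ * S * V = T := by
    intro C
    by_cases hC : C ∈ coset '' Om S T
    · obtain ⟨W, hW, rfl⟩ := hC
      obtain ⟨V, hWV, hV⟩ := exists_rep hW
      exact ⟨V, fun _ => ⟨(coset_eq hWV).symm, hV⟩⟩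
    · exact ⟨0, fun h => absurd h hC⟩
  choose V hV using hrep
  have hunion : Sol S T a = ⋃ C ∈ hfin.toFinset, (fun X => V C * X) '' Sol T T a := by
    ext Y
    simp only [Set.Finite.mem_toFinset, Set.mem_iUnion, exists_prop]
    constructor
    · intro hY
      obtain ⟨U, hU, hYU⟩ := exists_of_mem_Sol hS hT hTd ha hY
      have hYd : Y.det ≠ 0 := by
        intro h0
        have h1 := congrArg Matrix.det hYU
        rw [det_conj, det_conj, h0] at h1
        refine mul_ne_zero (pow_ne_zero 2 hU.ne_zero) hTd ?_
        rw [← h1]; simp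
      have hYO : Y ∈ Om S T := by
        refine ⟨hYd, U⁻¹, Matrix.isUnit_nonsing_inv_det _ hU, ?_⟩
        have e : (U⁻¹)ᵀ * (Uᵀ * T * U) * U⁻¹ = (U * U⁻¹)ᵀ * T * (U * U⁻¹) := by
          simp only [Matrix.transpose_mul, Matrix.mul_assoc]
        rw [hYU, e, Matrix.mul_nonsing_inv _ hU]
        simp
      obtain ⟨hVc, -, hVT⟩ := hV (coset Y) ⟨Y, hYO, rfl⟩
      obtain ⟨A, -, hYA⟩ : Y ∈ coset (V (coset Y)) := by rw [hVc]; exact mem_coset_self Y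
      refine ⟨coset Y, ⟨Y, hYO, rfl⟩, A, ?_, hYA.symm⟩
      rw [mem_Sol] at hY ⊢
      have e : Aᵀ * T * A = Yᵀ * S * Y := by
        rw [← hVT]
        conv_rhs => rw [hYA]
        simp only [Matrix.transpose_mul, Matrix.mul_assoc]
      rw [e]; exact hY
    · rintro ⟨C, hC, X, hX, rfl⟩
      rw [mem_Sol] at hX ⊢
      have e : (V C * X)ᵀ * S * (V C * X) = Xᵀ * T * X := by
        conv_rhs => rw [← (hV C hC).2.2]
        simp only [Matrix.transpose_mul, Matrix.mul_assoc]
      simp only [e]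
      exact hX
  rw [hunion, measure_biUnion_finset]
  · rw [Finset.sum_congr rfl (g := fun _ =>
      ((p : ENNReal) ^ (m * ((T.det.valuation - S.det.valuation) / 2)))⁻¹ * vol p m (Sol T T a)),
      Finset.sum_const, nsmul_eq_mul, Set.ncard_eq_toFinset_card _ hfin]
    intro C hC
    have hC' := hV C (hfin.mem_toFinset.1 hC)
    rw [vol_mul_left hC'.2.1]
    have := valuation_of_rep hSd hC'.2.1 hC'.2.2
    congr 4
    omega
  · intro C hC C' hC' hne
    rw [Function.onFun, Set.disjoint_left]
    rintro _ ⟨X, hX, rfl⟩ ⟨X', hX', hXX⟩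
    apply hne
    have h1 := (hV C (hfin.mem_toFinset.1 hC)).1
    have h2 := (hV C' (hfin.mem_toFinset.1 hC')).1
    have hXU := isUnit_det_of_mem_Sol hT hTd ha hX
    have hXU' := isUnit_det_of_mem_Sol hT hTd ha hX'
    rw [← h1, ← h2, coset_eq ⟨X, hXU, rfl⟩, coset_eq (W := V C') ⟨X', hXU', rfl⟩]
    exact congrArg coset hXX.symm
  · intro C hC
    have hemb := (by fun_prop : Continuous fun X : Matrix (Fin m) (Fin m) ℤ_[p] => V C * X)
      |>.isClosedEmbedding (mul_left_injective' (hV C (hfin.mem_toFinset.1 hC)).2.1)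
      |>.measurableEmbedding
    exact hemb.measurableSet_image.2 (measurableSet_Sol _ _ _)

/-! ### Passage to the limit -/

/-- The `a`-th term of the sequence defining the local density, for square matrices. -/
def densTerm (S T : Matrix (Fin m) (Fin m) ℤ_[p]) (a : ℕ) : ℝ :=
  (2 : ℝ)⁻¹ * ((p : ℝ) ^ (a * (m + 1).choose 2) * (vol p m (Sol S T a)).toReal)

lemma locDensPair_eq {S : Matrix (Fin m) (Fin m) ℤ_[p]} (hS : S.IsSymm)
    (T : Matrix (Fin m) (Fin m) ℤ_[p]) {L : ℝ} {a₀ : ℕ} (h : ∀ a, a₀ ≤ a → densTerm S T a = L) :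
    locDensPair p S T = L := by
  refine Tendsto.limUnder_eq (tendsto_const_nhds.congr' ?_)
  filter_upwards [eventually_ge_atTop (max a₀ 1)] with a ha
  have hp : (p : ℝ) ≠ 0 := by exact_mod_cast (Fact.out : p.Prime).ne_zero
  rw [← h a (le_of_max_le_left ha), densTerm, vol_Sol hS T (le_of_max_le_right ha)]
  simp only [if_true, Fintype.card_fin, _root_.zpow_neg, _root_.zpow_one]
  rw [ENNReal.toReal_mul, ENNReal.toReal_inv, ENNReal.toReal_pow, ENNReal.toReal_natCast,
    ENNReal.toReal_natCast]
  have hD : ((m : ℤ) * ((m : ℤ) + 1)) / 2 = (((m + 1).choose 2 : ℕ) : ℤ) := by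
    rw [Nat.choose_two_right, Nat.add_sub_cancel, mul_comm]
    push_cast
    rfl
  rw [hD, mul_add, zpow_add₀ hp, mul_neg, _root_.zpow_neg]
  have e1 : (a : ℤ) * ((m : ℤ) * (m : ℤ)) = ((a * m ^ 2 : ℕ) : ℤ) := by push_cast; ring
  have e2 : (a : ℤ) * (((m + 1).choose 2 : ℕ) : ℤ) = ((a * (m + 1).choose 2 : ℕ) : ℤ) := by
    push_cast; ring
  rw [e1, e2, zpow_natCast, zpow_natCast]
  ring

lemma densTerm_self_const {T : Matrix (Fin m) (Fin m) ℤ_[p]} (hT : T.IsSymm) (hTd : T.det ≠ 0) :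
    ∀ a, T.det.valuation + 2 ≤ a → densTerm T T a = densTerm T T (T.det.valuation + 2) := by
  intro a ha
  induction a, ha using Nat.le_induction with
  | base => rfl
  | succ a ha ih =>
    rw [← ih, densTerm, densTerm, vol_Sol_succ hT hTd ha, ENNReal.toReal_mul, ENNReal.toReal_pow,
      ENNReal.toReal_natCast]
    ring

end KM
/-- `α_p(S,T) = #(Ω(S,T)/GL_m(ℤ_p)) · p^{-m(ν(det T)-ν(det S))/2} · α_p(T)`. -/
theorem statement4 (p : ℕ) [Fact p.Prime] (m : ℕ) (hm : 1 ≤ m)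
    (S T : Matrix (Fin m) (Fin m) ℤ_[p])
    (hSs : S.IsSymm) (hSd : S.det ≠ 0) (hTs : T.IsSymm) (hTd : T.det ≠ 0) :
    let Ω : Set (Matrix (Fin m) (Fin m) ℤ_[p]) :=
      {W | W.det ≠ 0 ∧ KM.IntEquiv p (Wᵀ * S * W) T}
    let cosets := (fun W => {W' | KM.SameRight p W W'}) '' Ω
    cosets.Finite ∧
      KM.locDensPair p S T =
        (cosets.ncard : ℝ) *
          (p : ℝ) ^ (-((m : ℝ) * ((T.det.valuation - S.det.valuation : ℤ) : ℝ)) / 2) *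
          KM.locDens p T := by
  intro Ω cosets
  have hfin : cosets.Finite := KM.finite_cosets hSd
  refine ⟨hfin, ?_⟩
  have hp : (0 : ℝ) < p := by exact_mod_cast (Fact.out : p.Prime).pos
  have hTT : KM.locDens p T = KM.densTerm T T (T.det.valuation + 2) :=
    KM.locDensPair_eq hTs T (KM.densTerm_self_const hTs hTd)
  rw [hTT]
  refine KM.locDensPair_eq hSs T (a₀ := T.det.valuation + 2) fun a ha => ?_
  rw [← KM.densTerm_self_const hTs hTd a ha, KM.densTerm, KM.densTerm, KM.vol_Sol_eq hSs hSd hTs hTd ha,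
    ENNReal.toReal_mul, ENNReal.toReal_mul, ENNReal.toReal_inv, ENNReal.toReal_pow,
    ENNReal.toReal_natCast, ENNReal.toReal_natCast]
  change _ * (_ * ((cosets.ncard : ℝ) * _)) = _
  rcases Set.eq_empty_or_nonempty cosets with h0 | ⟨C, hC⟩
  · simp [h0]
  -- the real exponent is the integer `-m ν(det V)` as soon as a representative `V` exists
  · obtain ⟨W, hW, -⟩ := hC
    obtain ⟨V, -, hVd, hVT⟩ := KM.exists_rep hW
    have hv := KM.valuation_of_rep hSd hVd hVT
    have e : -((m : ℝ) * ((T.det.valuation - S.det.valuation : ℤ) : ℝ)) / 2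
        = -((m * ((T.det.valuation - S.det.valuation) / 2) : ℕ) : ℝ) := by
      have h1 : (T.det.valuation - S.det.valuation) / 2 = V.det.valuation := by omega
      rw [h1, hv]
      push_cast
      ring
    rw [e, Real.rpow_neg hp.le, Real.rpow_natCast]
    ring
end
end
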